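/- arXiv:2603.13914 — 3 statements merged into one kernel-verified Lean document; each statement's English description precedes it below -/
import Mathlib

section
/- Let s be a sequence of length L = R·C over n-th roots of unity whose R × C array is given by S_{i,j} = ω^{p(i,j)} for ω = e^{2πi/n} and p ∈ ℤ[x,y]. If s possesses the Array Orthogonality Property for divisor C, then C ≤ n. -/
/-- Periodic cross-correlation of two length-`R` sequences. -/
noncomputable def xcorr (R : ℕ) (a b : ℕ → ℂ) (τ : ℕ) : ℂ :=
  ∑ i ∈ Finset.range R, a i * (starRingEnd ℂ) (b ((i + τ) % R))

/-- The Array Orthogonality Property for an `R × C` array `S`. -/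
def AOP (R C : ℕ) (S : ℕ → ℕ → ℂ) : Prop :=
  (∀ τ j₀ j₁ : ℕ, j₀ < C → j₁ < C → j₀ ≠ j₁ →
      xcorr R (fun i => S i j₀) (fun i => S i j₁) τ = 0) ∧
  (∀ τ : ℕ, ¬ (R ∣ τ) →
      ∑ j ∈ Finset.range C, xcorr R (fun i => S i j) (fun i => S i j) τ = 0)

/-- If the `R × C` array `S_{i,j} = ω^{p(i,j)}` (with `ω = e^{2πi/n}`, `p ∈ ℤ[x,y]`)
has the Array Orthogonality Property for divisor `C`, then `C ≤ n`. -/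
theorem aop_polynomial_column_bound (R C n : ℕ) (hR : 0 < R) (hC : 0 < C) (hn : 0 < n)
    (p : MvPolynomial (Fin 2) ℤ)
    (ω : ℂ) (hω : ω = Complex.exp (2 * Real.pi * Complex.I / n))
    (S : ℕ → ℕ → ℂ)
    (hS : ∀ i j : ℕ, S i j = ω ^ (MvPolynomial.eval ![(i : ℤ), (j : ℤ)] p))
    (hAOP : AOP R C S) : C ≤ n := by
  by_contra hlt
  have hlt : n < C := not_le.mp hlt
  have hne : (n : ℂ) ≠ 0 := by exact_mod_cast hn.ne'
  have hωn : ω ^ n = 1 := by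
    rw [hω]
    exact (Complex.isPrimitiveRoot_exp n hn.ne').pow_eq_one
  have hω0 : ω ≠ 0 := by rw [hω]; exact Complex.exp_ne_zero _
  have hnorm : ‖ω‖ = 1 := Complex.norm_eq_one_of_pow_eq_one hωn hn.ne'
  have hcong : ∀ i : ℕ, (n : ℤ) ∣ MvPolynomial.eval ![(i : ℤ), (n : ℤ)] p -
      MvPolynomial.eval ![(i : ℤ), ((0 : ℕ) : ℤ)] p := by
    intro i
    rw [← CharP.intCast_eq_zero_iff (ZMod n) n, Int.cast_sub, sub_eq_zero]
    have key : ∀ v : Fin 2 → ℤ, ((MvPolynomial.eval v p : ℤ) : ZMod n) =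
        MvPolynomial.eval₂ (Int.castRingHom (ZMod n)) (fun k => ((v k : ℤ) : ZMod n)) p := by
      intro v
      have h := MvPolynomial.eval₂_comp_left (Int.castRingHom (ZMod n)) (RingHom.id ℤ) v p
      simpa [MvPolynomial.eval₂_id, Function.comp_def] using h
    rw [key, key]
    congr 1
    funext k
    fin_cases k <;> simp
  have hcol : ∀ i : ℕ, S i n = S i 0 := by
    intro i
    obtain ⟨k, hk⟩ := hcong i
    rw [hS, hS, eq_add_of_sub_eq hk, zpow_add₀ hω0, zpow_mul, zpow_natCast, hωn, one_zpow, one_mul]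
  have h0 := hAOP.1 0 0 n hC hlt hn.ne
  have h1 : xcorr R (fun i => S i 0) (fun i => S i n) 0 = (R : ℂ) := by
    unfold xcorr
    rw [Finset.sum_congr rfl (g := fun _ => (1 : ℂ))]
    · simp
    · intro i hi
      have hi' := Finset.mem_range.mp hi
      simp only [add_zero, Nat.mod_eq_of_lt hi', hcol]
      rw [Complex.mul_conj, Complex.normSq_eq_norm_sq, hS, norm_zpow, hnorm]
      simp
  rw [h1] at h0
  exact hR.ne' (by exact_mod_cast h0)
end

section
/- Let s be a sequence of length L = R·C over n-th roots of unity whose R × C array is S_{i,j} = ω^{p(i,j)} with ω = e^{2πi/n} and p ∈ ℤ[x,y]. If s possesses the Array Orthogonality Property for divisor C, then R ≤ n. -/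
open Finset

lemma aux_shift {G : ℕ → ℂ} {R : ℕ} (hG : ∀ i, G (i + R) = G i) (i : ℕ) :
    ∑ τ ∈ range R, G (i + τ) = ∑ τ ∈ range R, G τ := by
  induction i with
  | zero => simp
  | succ i ih =>
    rw [← ih]
    have h1 := Finset.sum_range_succ (fun τ => G (i + τ)) R
    have h2 := Finset.sum_range_succ' (fun τ => G (i + τ)) R
    have h3 : ∑ τ ∈ range R, G (i + 1 + τ) = ∑ τ ∈ range R, G (i + (τ + 1)) :=
      Finset.sum_congr rfl (fun τ _ => by congr 1; ring)
    rw [h3]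
    rw [h1] at h2
    simp only [hG, add_zero] at h2
    exact (add_right_cancel h2).symm

lemma second_diff (Q : Polynomial ℤ) (x s t : ℤ) :
    s * t ∣ Q.eval (x + s + t) - Q.eval (x + s) - Q.eval (x + t) + Q.eval x := by
  obtain ⟨r, hr⟩ : (Polynomial.C s) ∣ Q.comp (Polynomial.X + Polynomial.C s) - Q.comp Polynomial.X := by
    have := Polynomial.sub_dvd_eval_sub (Polynomial.X + Polynomial.C s) (Polynomial.X : Polynomial ℤ) (Q.map Polynomial.C)
    simpa [Polynomial.eval_map, Polynomial.comp] using this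
  have h : ∀ y, Q.eval (y + s) - Q.eval y = s * r.eval y := by
    intro y
    have := congrArg (Polynomial.eval y) hr
    simpa using this
  obtain ⟨z, hz⟩ := Polynomial.sub_dvd_eval_sub (x + t) x r
  refine ⟨z, ?_⟩
  have h1 := h (x + t)
  have h2 := h x
  have e : x + s + t = x + t + s := by ring
  rw [e]
  have : r.eval (x+t) = r.eval x + t * z := by rw [add_sub_cancel_left] at hz; linarith
  rw [this] at h1
  linear_combination h1 - h2

lemma charq {k : Type*} [Field k] {n R M c d R' : ℕ} (hM : 0 < M) (hc : 2 ≤ c) (hn : n = M * c)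
    (hd : d = Nat.gcd n R) (hR : R = d * R') (hk : (R' : k) ≠ 0) (hnR : n < R)
    (a b : ℕ → k) (ha : ∀ i, a (i + M) = a i) (hb : ∀ i, b (i + M) = b i)
    (ha0 : ∃ i, a i ≠ 0) (hb0 : ∃ i, b i ≠ 0)
    (hdvd : (Polynomial.X ^ R - 1 : Polynomial k) ∣
      (∑ i ∈ range n, Polynomial.C (a i) * Polynomial.X ^ i) *
      (∑ i ∈ range n, Polynomial.C (b i) * Polynomial.X ^ i)) : False := by
  classical
  have key : ∀ a : ℕ → k, (∀ i, a (i + M) = a i) → (∃ i, a i ≠ 0) →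
      ∃ E : Polynomial k, E ≠ 0 ∧ E.natDegree < M ∧
        (∑ i ∈ range n, Polynomial.C (a i) * Polynomial.X ^ i) * (Polynomial.X ^ M - 1) =
          E * (Polynomial.X ^ n - 1) := by
    intro a ha ⟨i0, hi0⟩
    have hcoef : ∀ j, (∑ i ∈ range M, Polynomial.C (a i) * Polynomial.X ^ i).coeff j = if j < M then a j else 0 := by
      intro j
      simp [Polynomial.coeff_X_pow]
    refine ⟨∑ i ∈ range M, Polynomial.C (a i) * Polynomial.X ^ i, ?_, ?_, ?_⟩
    · intro h0
      have h1 := hcoef (i0 % M)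
      rw [h0, if_pos (Nat.mod_lt _ hM)] at h1
      have h2 : a (i0 % M) = a i0 := by
        have : Function.Periodic a M := ha
        exact this.map_mod_nat i0
      apply hi0; rw [← h2, ← h1]; simp
    · have : (∑ i ∈ range M, Polynomial.C (a i) * Polynomial.X ^ i).natDegree ≤ M - 1 := by
        rw [Polynomial.natDegree_le_iff_coeff_eq_zero]
        intro N hN
        rw [hcoef, if_neg (by omega)]
      omega
    · subst hn
      have : ∀ c, (∑ i ∈ range (M * c), Polynomial.C (a i) * Polynomial.X ^ i) * (Polynomial.X ^ M - 1) =
          (∑ i ∈ range M, Polynomial.C (a i) * Polynomial.X ^ i) * (Polynomial.X ^ (M * c) - 1) := by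
        intro c
        induction c with
        | zero => simp
        | succ c ih =>
          rw [Nat.mul_succ, Finset.sum_range_add, add_mul, ih]
          have hper : ∀ i, a (M * c + i) = a i := by
            intro i
            have : Function.Periodic a M := ha
            have := (this.nat_mul c) i
            rw [mul_comm, add_comm]; exact this
          have : ∑ x ∈ range M, Polynomial.C (a (M * c + x)) * Polynomial.X ^ (M * c + x)
              = Polynomial.X ^ (M * c) * ∑ x ∈ range M, Polynomial.C (a x) * Polynomial.X ^ x := by
            rw [Finset.mul_sum]
            refine Finset.sum_congr rfl (fun x _ => ?_)
            rw [hper, pow_add]; ring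
          rw [this, pow_add]; ring
      exact this c
  obtain ⟨E, hE0, hEd, hE⟩ := key a ha ha0
  obtain ⟨E', hE'0, hE'd, hE'⟩ := key b hb hb0
  set P : Polynomial k := ∑ t ∈ range R', (Polynomial.X ^ d) ^ t with hP
  have hn0 : 0 < n := by rw [hn]; positivity
  have hd0 : 0 < d := by rw [hd]; exact Nat.gcd_pos_of_pos_left _ hn0
  have hPm : P * (Polynomial.X ^ d - 1) = Polynomial.X ^ R - 1 := by
    rw [hP, geom_sum_mul, ← pow_mul, ← hR]
  have hcop : IsCoprime P (Polynomial.X ^ n - 1) := by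
    rw [Polynomial.isCoprime_iff_aeval_ne_zero_of_isAlgClosed k (AlgebraicClosure k)]
    intro z
    by_contra! hcon
    obtain ⟨h1, h2⟩ := hcon
    have h3 : z ^ R = 1 := by
      have := congrArg (Polynomial.aeval z) hPm
      simp only [map_mul, h1, zero_mul] at this
      simp at this
      exact (sub_eq_zero.mp this.symm)
    have h4 : z ^ n = 1 := by simpa [sub_eq_zero] using h2
    have h5 : z ^ d = 1 := by rw [hd]; exact pow_gcd_eq_one.mpr ⟨h4, h3⟩
    rw [hP] at h1
    simp [h5] at h1
    apply hk
    apply (algebraMap k (AlgebraicClosure k)).injective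
    rw [map_natCast, map_zero]
    exact h1
  have hPdvd : P ∣ E * E' := by
    have h1 : P ∣ (E * E') * (Polynomial.X ^ n - 1) ^ 2 := by
      have : (E * E') * (Polynomial.X ^ n - 1) ^ 2 = ((∑ i ∈ range n, Polynomial.C (a i) * Polynomial.X ^ i) *
      (∑ i ∈ range n, Polynomial.C (b i) * Polynomial.X ^ i)) * (Polynomial.X ^ M - 1) ^ 2 := by
        linear_combination (-E * (Polynomial.X ^ n - 1)) * hE' - ((∑ i ∈ range n, Polynomial.C (b i) * Polynomial.X ^ i) * (Polynomial.X ^ M - 1)) * hE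
      rw [this]
      exact Dvd.dvd.mul_right ((Dvd.intro _ hPm).trans hdvd) _
    exact (hcop.pow_right).dvd_of_dvd_mul_right h1
  have hdeg := Polynomial.natDegree_le_of_dvd hPdvd (mul_ne_zero hE0 hE'0)
  rw [Polynomial.natDegree_mul hE0 hE'0] at hdeg
  have hR0 : (Polynomial.X ^ R - 1 : Polynomial k) ≠ 0 := Polynomial.X_pow_sub_C_ne_zero (by omega) 1
  have hPd : P.natDegree + d = R := by
    have h1 := congrArg Polynomial.natDegree hPm
    have hP0 : P ≠ 0 := by
      intro h
      apply hR0
      rw [← hPm, h, zero_mul]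
    have hX0 : (Polynomial.X ^ d - 1 : Polynomial k) ≠ 0 := Polynomial.X_pow_sub_C_ne_zero hd0 1
    rw [Polynomial.natDegree_mul hP0 hX0] at h1
    have e1 : (Polynomial.X ^ d - 1 : Polynomial k).natDegree = d := Polynomial.natDegree_X_pow_sub_C (r := 1)
    have e2 : (Polynomial.X ^ R - 1 : Polynomial k).natDegree = R := Polynomial.natDegree_X_pow_sub_C (r := 1)
    rw [e1, e2] at h1; exact h1
  have hge : n + d ≤ R := by
    obtain ⟨m, hm⟩ : d ∣ n := hd ▸ Nat.gcd_dvd_left _ _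
    rw [hm, hR] at hnR ⊢
    have : m < R' := Nat.lt_of_mul_lt_mul_left hnR
    nlinarith
  have : 2 * M ≤ n := by rw [hn]; nlinarith
  omega

lemma exists_val (q : ℕ) (hq : q.Prime) :
    ∃ V : ValuationSubring ℂ, CharP (IsLocalRing.ResidueField V) q := by
  let A : Subring ℂ := (Int.castRingHom ℂ).range
  let I : Ideal A := Ideal.span {(q : A)}
  have hI : I ≠ ⊤ := by
    intro h
    have h1 : (1 : A) ∈ I := by rw [h]; trivial
    rw [Ideal.mem_span_singleton] at h1
    obtain ⟨⟨_, ⟨z, rfl⟩⟩, hz⟩ := h1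
    have h2 := congrArg (Subtype.val) hz
    simp at h2
    have h3 : (1 : ℤ) = q * z := by exact_mod_cast h2
    have h4 : (q : ℤ) ∣ 1 := ⟨z, h3⟩
    have h5 : q ∣ 1 := by exact_mod_cast h4
    exact hq.one_lt.ne' (Nat.dvd_one.mp h5)
  obtain ⟨V, -, hV⟩ := Ideal.image_subset_nonunits_valuationSubring I hI
  refine ⟨V, ?_⟩
  have h1 : ((q : V) : ℂ) ∈ V.nonunits := by
    apply hV
    exact ⟨(q : A), Ideal.subset_span rfl, by simp⟩
  rw [ValuationSubring.coe_mem_nonunits_iff, ← IsLocalRing.residue_eq_zero_iff, map_natCast] at h1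
  have := Fact.mk hq
  exact (CharP.charP_iff_prime_eq_zero hq).mpr h1

lemma root_mem (V : ValuationSubring ℂ) {x : ℂ} {n : ℕ} (hn : 0 < n) (h : x ^ n = 1) : x ∈ V := by
  rcases V.mem_or_inv_mem x with h1 | h1
  · exact h1
  · have hx : x ≠ 0 := by rintro rfl; simp [hn.ne'] at h
    have : x = (x⁻¹) ^ (n - 1) := by
      obtain ⟨m, rfl⟩ : ∃ m, n = m + 1 := ⟨n - 1, by omega⟩
      rw [Nat.add_sub_cancel, inv_pow]
      rw [pow_succ'] at h
      exact eq_inv_of_mul_eq_one_left h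
    rw [this]
    exact pow_mem h1 _

lemma root_res (V : ValuationSubring ℂ) {q : ℕ} (hq : q.Prime) [CharP (IsLocalRing.ResidueField V) q]
    (x : V) (h : (x : ℂ) ^ q = 1) : IsLocalRing.residue V x = 1 := by
  have := Fact.mk hq
  have h1 : x ^ q = 1 := Subtype.ext (by simpa using h)
  have h2 : (IsLocalRing.residue V x) ^ q = 1 := by rw [← map_pow, h1, map_one]
  have h3 : (IsLocalRing.residue V x - 1) ^ q = 0 := by
    rw [sub_pow_char, h2, one_pow, sub_self]
  exact sub_eq_zero.mp (pow_eq_zero_iff hq.ne_zero |>.mp h3)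

lemma normalize_seq (V : ValuationSubring ℂ) {q M : ℕ} (hq : q.Prime) (hM : 0 < M)
    [CharP (IsLocalRing.ResidueField V) q]
    (δ : ℕ → ℂ) (hδ : ∀ i, ∃ v : ℂ, v ^ q = 1 ∧ δ (i + M) = v * δ i) (h0 : ∃ i, δ i ≠ 0) :
    ∃ (c : ℂ) (a : ℕ → V), c ≠ 0 ∧ (∀ i, δ i = c * a i) ∧
      (∃ i, IsLocalRing.residue V (a i) ≠ 0) ∧
      ∀ i, IsLocalRing.residue V (a (i + M)) = IsLocalRing.residue V (a i) := by
  choose v hv hδv using hδ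
  obtain ⟨i1, hi1, hmax⟩ := Finset.exists_max_image (range M) (fun i => V.valuation (δ i))
    ⟨0, Finset.mem_range.mpr hM⟩
  have hle : ∀ i, V.valuation (δ i) ≤ V.valuation (δ i1) := by
    intro i
    induction i using Nat.strong_induction_on with
    | _ i ih =>
      by_cases hi : i < M
      · exact hmax i (Finset.mem_range.mpr hi)
      · obtain ⟨j, rfl⟩ : ∃ j, i = j + M := ⟨i - M, by omega⟩
        rw [hδv, map_mul]
        have h1 : V.valuation (v j) ≤ 1 := (V.valuation_le_one_iff _).mpr (root_mem V hq.pos (hv j))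
        calc _ ≤ 1 * V.valuation (δ j) := mul_le_mul_left h1 _
          _ ≤ _ := by rw [one_mul]; exact ih j (by omega)
  have hc : δ i1 ≠ 0 := by
    intro h
    obtain ⟨i, hi⟩ := h0
    have := hle i
    rw [h, map_zero] at this
    apply hi
    simpa using this
  have hex : ∀ i, ∃ a : V, (a : ℂ) * δ i1 = δ i := fun i => (V.valuation_le_iff _ _).mp (hle i)
  choose a ha using hex
  refine ⟨δ i1, a, hc, fun i => by rw [← ha i]; ring, ⟨i1, ?_⟩, ?_⟩
  · have : a i1 = 1 := by
      apply Subtype.ext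
      exact mul_right_cancel₀ hc (by rw [ha]; simp)
    rw [this, map_one]; exact one_ne_zero
  · intro i
    have hvm := root_mem V hq.pos (hv i)
    have : a (i + M) = ⟨v i, hvm⟩ * a i := by
      apply Subtype.ext
      apply mul_right_cancel₀ hc
      rw [ha, hδv, ← ha i]
      simp [mul_assoc]
    rw [this, map_mul, root_res V hq _ (hv i), one_mul]

lemma core {n R M q d R' : ℕ} (hq : q.Prime) (hM : 0 < M) (hn : n = M * q)
    (hd : d = Nat.gcd n R) (hR : R = d * R') (hk : ¬ q ∣ R') (hnR : n < R)
    (δ ε : ℕ → ℂ) (hδ : ∀ i, ∃ v : ℂ, v ^ q = 1 ∧ δ (i + M) = v * δ i)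
    (hε : ∀ i, ∃ v : ℂ, v ^ q = 1 ∧ ε (i + M) = v * ε i)
    (hδ0 : ∃ i, δ i ≠ 0) (hε0 : ∃ i, ε i ≠ 0)
    (hz : ∀ ξ : ℂ, ξ ^ R = 1 →
      (∑ i ∈ range n, δ i * ξ ^ i) * (∑ i ∈ range n, ε i * ξ ^ i) = 0) : False := by
  obtain ⟨V, hV⟩ := exists_val q hq
  obtain ⟨c, a, hc, hca, ha0, ha⟩ := normalize_seq V hq hM δ hδ hδ0
  obtain ⟨c', b, hc', hcb, hb0, hb⟩ := normalize_seq V hq hM ε hε hε0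
  have hR0 : 0 < R := by omega
  set A : Polynomial V := ∑ i ∈ range n, Polynomial.C (a i) * Polynomial.X ^ i with hA
  set B : Polynomial V := ∑ i ∈ range n, Polynomial.C (b i) * Polynomial.X ^ i with hB
  have hmonic : (Polynomial.X ^ R - 1 : Polynomial V).Monic := Polynomial.monic_X_pow_sub_C 1 hR0.ne'
  have hdvd : (Polynomial.X ^ R - 1 : Polynomial V) ∣ A * B := by
    rw [← Polynomial.map_dvd_map V.subtype V.subtype_injective hmonic]
    have hprim := Complex.isPrimitiveRoot_exp R hR0.ne'
    have e1 : (Polynomial.X ^ R - 1 : Polynomial V).map V.subtype = Polynomial.X ^ R - 1 := by simp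
    rw [e1, Polynomial.X_pow_sub_one_eq_prod hR0 hprim]
    apply Finset.prod_dvd_of_coprime
    · intro x _ y _ hxy
      exact Polynomial.isCoprime_X_sub_C_of_isUnit_sub (sub_ne_zero.mpr hxy).isUnit
    · intro ξ hξ
      rw [Polynomial.dvd_iff_isRoot, Polynomial.IsRoot.def]
      have hξ' : ξ ^ R = 1 := by
        rw [Polynomial.mem_nthRootsFinset hR0] at hξ; exact hξ
      have h1 := hz ξ hξ'
      simp only [hca, hcb, mul_assoc, ← Finset.mul_sum] at h1
      have h2 : (A.map V.subtype).eval ξ = ∑ i ∈ range n, (a i : ℂ) * ξ ^ i := by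
        simp [hA, Polynomial.eval_finsetSum, Polynomial.map_sum]
      have h3 : (B.map V.subtype).eval ξ = ∑ i ∈ range n, (b i : ℂ) * ξ ^ i := by
        simp [hB, Polynomial.eval_finsetSum, Polynomial.map_sum]
      rw [Polynomial.map_mul, Polynomial.eval_mul, h2, h3]
      have h4 : c * c' * ((∑ i ∈ range n, (a i : ℂ) * ξ ^ i) * (∑ i ∈ range n, (b i : ℂ) * ξ ^ i)) = 0 := by
        rw [← h1]; ring
      exact (mul_eq_zero.mp h4).resolve_left (mul_ne_zero hc hc')
  have hdvd2 := Polynomial.map_dvd (IsLocalRing.residue V) hdvd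
  refine charq (k := IsLocalRing.ResidueField V) hM hq.two_le hn hd hR ?_ hnR _ _ ha hb ha0 hb0 ?_
  · rw [Ne, CharP.cast_eq_zero_iff _ q]; exact hk
  · simpa [hA, hB, Polynomial.map_sum] using hdvd2

lemma ft_corr {R : ℕ} (hR : 0 < R) (a b : ℕ → ℂ) (ξ : ℂ) (hξ : ξ ^ R = 1) :
    ∑ τ ∈ range R, xcorr R a b τ * (starRingEnd ℂ ξ) ^ τ =
      (∑ i ∈ range R, a i * ξ ^ i) * (starRingEnd ℂ) (∑ i ∈ range R, b i * ξ ^ i) := by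
  have hnorm : ξ * starRingEnd ℂ ξ = 1 := by
    rw [Complex.mul_conj, Complex.normSq_eq_norm_sq, Complex.norm_eq_one_of_pow_eq_one hξ hR.ne']
    simp
  set ξ' := starRingEnd ℂ ξ with hξ'
  have hξ'R : ξ' ^ R = 1 := by rw [hξ', ← map_pow, hξ, map_one]
  unfold xcorr
  simp only [Finset.sum_mul]
  rw [Finset.sum_comm]
  refine Finset.sum_congr rfl (fun i _ => ?_)
  have h1 := aux_shift (R := R) (G := fun l => starRingEnd ℂ (b (l % R)) * ξ' ^ l)
    (fun l => by simp [pow_add, hξ'R]) i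
  have h2 : ∑ l ∈ range R, starRingEnd ℂ (b (l % R)) * ξ' ^ l =
      (starRingEnd ℂ) (∑ i ∈ range R, b i * ξ ^ i) := by
    rw [map_sum]
    refine Finset.sum_congr rfl (fun l hl => ?_)
    rw [Nat.mod_eq_of_lt (Finset.mem_range.mp hl), map_mul, map_pow]
  rw [← h2, ← h1, Finset.mul_sum]
  refine Finset.sum_congr rfl (fun τ _ => ?_)
  have : ξ ^ i * ξ' ^ i = 1 := by rw [← mul_pow, hnorm, one_pow]
  rw [pow_add]
  linear_combination (-(a i * (starRingEnd ℂ) (b ((i + τ) % R)) * ξ' ^ τ)) * this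

lemma xcorr_zero {R : ℕ} (a : ℕ → ℂ) (ha : ∀ i, a i * starRingEnd ℂ (a i) = 1) :
    xcorr R a a 0 = R := by
  unfold xcorr
  rw [Finset.sum_congr rfl (g := fun _ => (1 : ℂ))]
  · simp
  · intro i hi
    rw [add_zero, Nat.mod_eq_of_lt (Finset.mem_range.mp hi), ha]

lemma aop_dvd {R C : ℕ} (hR : 0 < R) (hC : 0 < C) (S : ℕ → ℕ → ℂ)
    (hS : ∀ i j, S i j * starRingEnd ℂ (S i j) = 1) (h : AOP R C S) : C ∣ R := by
  classical
  obtain ⟨h1, h2⟩ := h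
  have hprim := Complex.isPrimitiveRoot_exp R hR.ne'
  set ζ := Complex.exp (2 * Real.pi * Complex.I / R) with hζ
  let F : ℕ → ℕ → ℂ := fun j k => ∑ i ∈ range R, S i j * (ζ ^ k) ^ i
  have hk : ∀ k, (ζ ^ k) ^ R = 1 := fun k => by rw [← pow_mul, mul_comm, pow_mul, hprim.pow_eq_one, one_pow]
  have hprod : ∀ k j, j < C → j ≠ 0 → F 0 k = 0 ∨ F j k = 0 := by
    intro k j hj hj0
    have := ft_corr hR (fun i => S i 0) (fun i => S i j) (ζ ^ k) (hk k)
    simp only [h1 _ 0 j hC hj hj0.symm, zero_mul, Finset.sum_const_zero] at this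
    rcases mul_eq_zero.mp this.symm with h | h
    · exact Or.inl h
    · exact Or.inr ((map_eq_zero _).mp h)
  have hsum : ∀ k, ∑ j ∈ range C, F j k * starRingEnd ℂ (F j k) = R * C := by
    intro k
    have e : ∀ j ∈ range C, F j k * starRingEnd ℂ (F j k) =
        ∑ τ ∈ range R, xcorr R (fun i => S i j) (fun i => S i j) τ * (starRingEnd ℂ (ζ ^ k)) ^ τ :=
      fun j _ => (ft_corr hR (fun i => S i j) (fun i => S i j) (ζ ^ k) (hk k)).symm
    rw [Finset.sum_congr rfl e, Finset.sum_comm, Finset.sum_eq_single 0]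
    · simp only [pow_zero, mul_one]
      rw [Finset.sum_congr rfl (fun j _ => xcorr_zero (R := R) (fun i => S i j) (fun i => hS i j))]
      simp [mul_comm]
    · intro τ hτ hτ0
      rw [← Finset.sum_mul, h2 τ, zero_mul]
      intro hd
      have := Nat.le_of_dvd (Nat.pos_of_ne_zero hτ0) hd
      have := Finset.mem_range.mp hτ
      omega
    · intro h; exact absurd (Finset.mem_range.mpr hR) h
  have hval : ∀ k, F 0 k * starRingEnd ℂ (F 0 k) = if F 0 k ≠ 0 then (R * C : ℂ) else 0 := by
    intro k
    split_ifs with hF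
    · rw [← hsum k, Finset.sum_eq_single 0]
      · intro j hj hj0
        rcases hprod k j (Finset.mem_range.mp hj) hj0 with h | h
        · exact absurd h hF
        · rw [h, zero_mul]
      · intro h; exact absurd (Finset.mem_range.mpr hC) h
    · push Not at hF
      rw [hF, zero_mul]
  have hpars : ∑ k ∈ range R, F 0 k * starRingEnd ℂ (F 0 k) = R * R := by
    have e : ∀ k ∈ range R, F 0 k * starRingEnd ℂ (F 0 k) =
        ∑ τ ∈ range R, xcorr R (fun i => S i 0) (fun i => S i 0) τ * (starRingEnd ℂ (ζ ^ k)) ^ τ :=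
      fun k _ => (ft_corr hR (fun i => S i 0) (fun i => S i 0) (ζ ^ k) (hk k)).symm
    rw [Finset.sum_congr rfl e, Finset.sum_comm, Finset.sum_eq_single 0]
    · simp [xcorr_zero (R := R) (fun i => S i 0) (fun i => hS i 0)]
    · intro τ hτ hτ0
      rw [← Finset.mul_sum]
      have e2 : ∀ k ∈ range R, (starRingEnd ℂ (ζ ^ k)) ^ τ = (starRingEnd ℂ (ζ ^ τ)) ^ k := by
        intro k _
        rw [← map_pow, ← map_pow, ← pow_mul, ← pow_mul, mul_comm]
      rw [Finset.sum_congr rfl e2]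
      have h3 := geom_sum_mul (starRingEnd ℂ (ζ ^ τ)) R
      rw [← map_pow, hk, map_one, sub_self] at h3
      rcases mul_eq_zero.mp h3 with h | h
      · rw [h, mul_zero]
      · exfalso
        have h4 : ζ ^ τ = 1 := by
          have := congrArg (starRingEnd ℂ) (sub_eq_zero.mp h)
          simpa using this
        have := hprim.dvd_of_pow_eq_one τ h4
        have := Nat.le_of_dvd (Nat.pos_of_ne_zero hτ0) this
        have := Finset.mem_range.mp hτ
        omega
    · intro h; exact absurd (Finset.mem_range.mpr hR) h
  rw [Finset.sum_congr rfl (fun k _ => hval k), ← Finset.sum_filter, Finset.sum_const, nsmul_eq_mul] at hpars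
  set K := (Finset.filter (fun k => F 0 k ≠ 0) (range R)).card
  have h5 : K * (R * C) = R * R := by exact_mod_cast hpars
  refine ⟨K, ?_⟩
  apply Nat.eq_of_mul_eq_mul_left hR
  rw [← h5]; ring

/-- The sequence `i ↦ ω ^ Q(i)`. -/
noncomputable def ffs (ω : ℂ) (Q : Polynomial ℤ) (i : ℤ) : ℂ := ω ^ (Q.eval i)

/-- The difference sequence. -/
noncomputable def dds (ω : ℂ) (Q : Polynomial ℤ) (R : ℕ) (i : ℤ) : ℂ := ffs ω Q i - ffs ω Q (i + R)

/-- The quotient sequence. -/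
noncomputable def wws (ω : ℂ) (Q : Polynomial ℤ) (R : ℕ) (i : ℤ) : ℂ := ffs ω Q (i + R) * (ffs ω Q i)⁻¹

lemma zpow_one_of_dvd {ω : ℂ} {n : ℕ} (h : ω ^ n = 1) {a : ℤ} (hd : (n : ℤ) ∣ a) : ω ^ a = 1 := by
  obtain ⟨z, rfl⟩ := hd
  rw [zpow_mul, zpow_natCast, h, one_zpow]

lemma root_ne {ω : ℂ} {n : ℕ} (hn : 0 < n) (h : ω ^ n = 1) : ω ≠ 0 := by
  rintro rfl; simp [hn.ne'] at h

lemma ffs_ne {ω : ℂ} (h0 : ω ≠ 0) (Q : Polynomial ℤ) (i : ℤ) : ffs ω Q i ≠ 0 := zpow_ne_zero _ h0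

lemma ffs_pow {ω : ℂ} {n : ℕ} (h : ω ^ n = 1) (Q : Polynomial ℤ) (i : ℤ) : ffs ω Q i ^ n = 1 := by
  unfold ffs
  rw [← zpow_natCast, ← zpow_mul]
  exact zpow_one_of_dvd h (Dvd.intro_left _ rfl)

lemma conj_root {x : ℂ} {n : ℕ} (hn : 0 < n) (h : x ^ n = 1) : starRingEnd ℂ x = x⁻¹ := by
  apply eq_inv_of_mul_eq_one_right
  rw [Complex.mul_conj, Complex.normSq_eq_norm_sq, Complex.norm_eq_one_of_pow_eq_one h hn.ne']
  simp

lemma ffs_per {ω : ℂ} {n : ℕ} (hn : 0 < n) (h : ω ^ n = 1) (Q : Polynomial ℤ) (i : ℤ) :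
    ffs ω Q (i + n) = ffs ω Q i := by
  have h0 := root_ne hn h
  have h1 := Polynomial.sub_dvd_eval_sub (i + n) i Q
  rw [add_sub_cancel_left] at h1
  have h2 := zpow_one_of_dvd h h1
  rw [zpow_sub₀ h0] at h2
  exact (div_eq_one_iff_eq (zpow_ne_zero _ h0)).mp h2

lemma ffs_mult {ω : ℂ} {n : ℕ} (hn : 0 < n) (h : ω ^ n = 1) (Q : Polynomial ℤ) (i s t : ℤ)
    (hd : (n : ℤ) ∣ s * t) :
    ffs ω Q (i + s + t) * ffs ω Q i = ffs ω Q (i + s) * ffs ω Q (i + t) := by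
  have h0 := root_ne hn h
  have h2 := zpow_one_of_dvd h (hd.trans (second_diff Q i s t))
  unfold ffs
  rw [zpow_add₀ h0, zpow_sub₀ h0, zpow_sub₀ h0] at h2
  have e1 := zpow_ne_zero (Q.eval (i + s)) h0
  have e2 := zpow_ne_zero (Q.eval (i + t)) h0
  field_simp at h2
  exact h2

lemma ffs_step {ω : ℂ} {n q : ℕ} (hn : 0 < n) (h : ω ^ n = 1) (Q : Polynomial ℤ) (i s : ℤ)
    (hd : (n : ℤ) ∣ s * q) : (ffs ω Q (i + s) * (ffs ω Q i)⁻¹) ^ q = 1 := by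
  have h0 := root_ne hn h
  have h1 := Polynomial.sub_dvd_eval_sub (i + s) i Q
  rw [add_sub_cancel_left] at h1
  unfold ffs
  rw [← div_eq_mul_inv, ← zpow_sub₀ h0, ← zpow_natCast, ← zpow_mul]
  exact zpow_one_of_dvd h (hd.trans (mul_dvd_mul_right h1 _))

lemma dds_step {ω : ℂ} {n q R : ℕ} (hn : 0 < n) (h : ω ^ n = 1) (Q : Polynomial ℤ) (i s : ℤ)
    (hd : (n : ℤ) ∣ s * q) (hd' : (n : ℤ) ∣ s * R) :
    ∃ v : ℂ, v ^ q = 1 ∧ dds ω Q R (i + s) = v * dds ω Q R i := by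
  have h0 := root_ne hn h
  refine ⟨_, ffs_step hn h Q i s hd, ?_⟩
  have h1 := ffs_mult hn h Q i s R hd'
  have h2 := ffs_ne h0 Q i
  unfold dds
  field_simp
  linear_combination -h1

lemma dds_per {ω : ℂ} {n R : ℕ} (hn : 0 < n) (h : ω ^ n = 1) (Q : Polynomial ℤ) (i : ℤ) :
    dds ω Q R (i + n) = dds ω Q R i := by
  unfold dds
  rw [ffs_per hn h, show i + n + R = i + R + n by ring, ffs_per hn h]

lemma wws_per {ω : ℂ} {n R : ℕ} (hn : 0 < n) (h : ω ^ n = 1) (Q : Polynomial ℤ) (i s : ℤ)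
    (hd : (n : ℤ) ∣ s * R) : wws ω Q R (i + s) = wws ω Q R i := by
  have h0 := root_ne hn h
  have h1 := ffs_mult hn h Q i s R hd
  have h2 := ffs_ne h0 Q i
  have h3 := ffs_ne h0 Q (i + s)
  unfold wws
  field_simp
  linear_combination h1

lemma wws_step {ω : ℂ} {n q R : ℕ} (hn : 0 < n) (h : ω ^ n = 1) (Q : Polynomial ℤ) (i s : ℤ)
    (hd : (n : ℤ) ∣ s * R * q) :
    (wws ω Q R (i + s) * (wws ω Q R i)⁻¹) ^ q = 1 := by
  have h0 := root_ne hn h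
  have h2 := zpow_one_of_dvd h (hd.trans (mul_dvd_mul_right (second_diff Q i s R) q))
  rw [zpow_mul, zpow_natCast, zpow_add₀ h0, zpow_sub₀ h0, zpow_sub₀ h0] at h2
  rw [← h2]
  congr 1
  unfold wws ffs
  have e1 := zpow_ne_zero (Q.eval (i + s)) h0
  have e2 := zpow_ne_zero (Q.eval (i + R)) h0
  have e3 := zpow_ne_zero (Q.eval i) h0
  field_simp

lemma wws_pow {ω : ℂ} {n R : ℕ} (h : ω ^ n = 1) (Q : Polynomial ℤ) (i : ℤ) :
    wws ω Q R i ^ n = 1 := by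
  unfold wws
  rw [mul_pow, inv_pow, ffs_pow h, ffs_pow h]; simp

lemma corr_eq {ω : ℂ} {n R : ℕ} (hn : 0 < n) (hnR : n < R) (h : ω ^ n = 1) (Q : Polynomial ℤ) :
    xcorr R (fun i => ffs ω Q i) (fun i => ffs ω Q i) n = (R - n : ℕ) + ∑ i ∈ range n, wws ω Q R i := by
  have h0 := root_ne hn h
  obtain ⟨m, rfl⟩ : ∃ m, R = m + n := ⟨R - n, by omega⟩
  unfold xcorr
  rw [Finset.sum_range_add, Nat.add_sub_cancel]
  beta_reduce
  congr 1
  · rw [Finset.sum_congr rfl (g := fun _ => (1 : ℂ))]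
    · simp
    · intro i hi
      have := Finset.mem_range.mp hi
      rw [Nat.mod_eq_of_lt (by omega), Nat.cast_add, ffs_per hn h, conj_root hn (ffs_pow h Q i),
        mul_inv_cancel₀ (ffs_ne h0 Q i)]
  · refine Finset.sum_congr rfl (fun x hx => ?_)
    have := Finset.mem_range.mp hx
    have e : (m + x + n) % (m + n) = x := by
      rw [show m + x + n = x + (m + n) by ring, Nat.add_mod_right, Nat.mod_eq_of_lt (by omega)]
    rw [e, conj_root hn (ffs_pow h Q x)]
    unfold wws
    congr 1
    rw [← ffs_per hn h Q ((m + x : ℕ) : ℤ)]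
    congr 1
    push_cast; ring

lemma dds_ft {ω : ℂ} {n R : ℕ} (hn : 0 < n) (h : ω ^ n = 1) (Q : Polynomial ℤ) (ξ : ℂ)
    (hξ : ξ ^ R = 1) :
    ∑ i ∈ range n, dds ω Q R i * ξ ^ i = (1 - ξ ^ n) * ∑ i ∈ range R, ffs ω Q i * ξ ^ i := by
  have h1 := Finset.sum_range_add (fun i : ℕ => ffs ω Q i * ξ ^ i) n R
  have h2 := Finset.sum_range_add (fun i : ℕ => ffs ω Q i * ξ ^ i) R n
  have e1 : ∑ x ∈ range R, ffs ω Q ((n + x : ℕ) : ℤ) * ξ ^ (n + x) = ξ ^ n * ∑ i ∈ range R, ffs ω Q i * ξ ^ i := by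
    rw [Finset.mul_sum]
    refine Finset.sum_congr rfl (fun x _ => ?_)
    rw [Nat.cast_add, add_comm (n : ℤ), ffs_per hn h, pow_add]; ring
  have e2 : ∑ x ∈ range n, ffs ω Q ((R + x : ℕ) : ℤ) * ξ ^ (R + x) = ∑ x ∈ range n, ffs ω Q (x + R) * ξ ^ x := by
    refine Finset.sum_congr rfl (fun x _ => ?_)
    rw [Nat.cast_add, add_comm (R : ℤ), pow_add, hξ, one_mul]
  rw [e1] at h1
  rw [e2, add_comm R n, h1] at h2
  unfold dds
  simp only [sub_mul, Finset.sum_sub_distrib, one_mul]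
  linear_combination h2

lemma dds_rev_ft {ω : ℂ} {n R : ℕ} (hn : 0 < n) (hR : 0 < R) (Q : Polynomial ℤ) (ξ : ℂ)
    (hξ : ξ ^ R = 1) :
    ∑ i ∈ range n, starRingEnd ℂ (dds ω Q R ((n : ℤ) - 1 - i)) * ξ ^ i
      = ξ ^ (n - 1) * starRingEnd ℂ (∑ i ∈ range n, dds ω Q R i * ξ ^ i) := by
  have hnorm : ξ * starRingEnd ℂ ξ = 1 := by
    rw [conj_root hR hξ, mul_inv_cancel₀ (root_ne hR hξ)]
  rw [← Finset.sum_range_reflect, map_sum, Finset.mul_sum]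
  refine Finset.sum_congr rfl (fun i hi => ?_)
  have := Finset.mem_range.mp hi
  have e : ((n - 1 - i : ℕ) : ℤ) = (n : ℤ) - 1 - i := by omega
  rw [e, map_mul, map_pow]
  have e2 : n - 1 = (n - 1 - i) + i := by omega
  have e3 : (n : ℤ) - 1 - (n - 1 - i) = i := by ring
  have e4 : ξ ^ i * starRingEnd ℂ ξ ^ i = 1 := by rw [← mul_pow, hnorm, one_pow]
  rw [e3]
  conv_rhs => rw [e2, pow_add]
  linear_combination (-(ξ ^ (n - 1 - i) * starRingEnd ℂ (dds ω Q R i))) * e4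

lemma sum_periodic {A : Type*} [AddCommMonoid A] {K : ℕ} (g : ℕ → A) (hg : ∀ i, g (i + K) = g i) (c : ℕ) :
    ∑ i ∈ range (K * c), g i = c • ∑ i ∈ range K, g i := by
  induction c with
  | zero => simp
  | succ c ih =>
    rw [Nat.mul_succ, Finset.sum_range_add, ih, succ_nsmul]
    congr 1
    refine Finset.sum_congr rfl (fun x _ => ?_)
    have h1 : Function.Periodic g K := hg
    have := (h1.nat_mul c) x
    rw [mul_comm K, add_comm]; exact this

lemma wsum_res (V : ValuationSubring ℂ) {q : ℕ} (hq : q.Prime) [CharP (IsLocalRing.ResidueField V) q]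
    {ω : ℂ} {n R K : ℕ} (hn : 0 < n) (h : ω ^ n = 1) (Q : Polynomial ℤ)
    (hd : (n : ℤ) ∣ K * R * q) :
    ∃ y : V, (y : ℂ) = ∑ i ∈ range (K * q), wws ω Q R i ∧ IsLocalRing.residue V y = 0 := by
  have hm : ∀ i : ℤ, wws ω Q R i ∈ V := fun i => root_mem V hn (wws_pow h Q i)
  refine ⟨∑ i ∈ range (K * q), (⟨wws ω Q R i, hm i⟩ : V), by simp, ?_⟩
  rw [map_sum, sum_periodic]
  · rw [nsmul_eq_mul, CharP.cast_eq_zero, zero_mul]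
  · intro i
    have h1 := wws_step hn h Q i K hd
    have h2 : wws ω Q R i ≠ 0 := root_ne hn (wws_pow h Q i)
    have h3 : (⟨wws ω Q R ((i + K : ℕ) : ℤ), hm _⟩ : V) =
        ⟨_, root_mem V hq.pos h1⟩ * ⟨wws ω Q R i, hm i⟩ := by
      apply Subtype.ext
      simp [h2]
    rw [h3, map_mul, root_res V hq _ h1, one_mul]

lemma main_abs {R C n : ℕ} (hR : 0 < R) (hC : 0 < C) (hn : 0 < n) {ω : ℂ} (h : ω ^ n = 1)
    (Q : ℕ → Polynomial ℤ) (hA : AOP R C (fun i j => ffs ω (Q j) i)) : R ≤ n := by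
  by_contra! hnR
  have h0 := root_ne hn h
  have hT : ∑ j ∈ range C, (((R - n : ℕ) : ℂ) + ∑ i ∈ range n, wws ω (Q j) R i) = 0 := by
    rw [← hA.2 n (fun hd => by have := Nat.le_of_dvd hn hd; omega)]
    exact Finset.sum_congr rfl (fun j _ => (corr_eq hn hnR h (Q j)).symm)
  have hCR : C ∣ R := aop_dvd hR hC _ (fun i j => by
    rw [conj_root hn (ffs_pow h (Q j) i), mul_inv_cancel₀ (ffs_ne h0 (Q j) i)]) hA
  have hwre : ∀ j (i : ℤ), -1 ≤ (wws ω (Q j) R i).re := by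
    intro j i
    have h1 := Complex.abs_re_le_norm (wws ω (Q j) R i)
    rw [Complex.norm_eq_one_of_pow_eq_one (wws_pow h (Q j) i) hn.ne'] at h1
    exact (abs_le.mp h1).1
  have hw1 : ∀ j (i : ℤ), dds ω (Q j) R i = 0 → wws ω (Q j) R i = 1 := by
    intro j i hz
    unfold dds at hz
    unfold wws
    rw [← sub_eq_zero.mp hz, mul_inv_cancel₀ (ffs_ne h0 (Q j) i)]
  have hTre : ∑ j ∈ range C, (((R - n : ℕ) : ℝ) + ∑ i ∈ range n, (wws ω (Q j) R i).re) = 0 := by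
    have := congrArg Complex.re hT
    simpa using this
  have hRn : ((R - n : ℕ) : ℝ) = R - n := by rw [Nat.cast_sub hnR.le]
  have hnRr : (n : ℝ) < R := by exact_mod_cast hnR
  have hCr : (0 : ℝ) < C := by exact_mod_cast hC
  have hnr : (0 : ℝ) < n := by exact_mod_cast hn
  -- row values
  have hgood : ∀ j, (∀ i : ℕ, dds ω (Q j) R i = 0) →
      ((R - n : ℕ) : ℝ) + ∑ i ∈ range n, (wws ω (Q j) R i).re = R := by
    intro j hj
    rw [Finset.sum_congr rfl (fun i _ => by rw [hw1 j i (hj i)])]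
    simp [hRn]
  have hbad : ∀ j, (R : ℝ) - 2 * n ≤ ((R - n : ℕ) : ℝ) + ∑ i ∈ range n, (wws ω (Q j) R i).re := by
    intro j
    have := Finset.sum_le_sum (s := range n) (fun i _ => hwre j i)
    simp at this
    rw [hRn]; linarith
  have hndvd : ¬ n ∣ R := by
    rintro ⟨c, hc⟩
    have hall : ∀ j, ∀ i : ℕ, dds ω (Q j) R i = 0 := by
      intro j i
      have h1 := Polynomial.sub_dvd_eval_sub ((i : ℤ) + R) i (Q j)
      rw [add_sub_cancel_left] at h1
      have h2 := zpow_one_of_dvd h (Dvd.dvd.trans (by exact_mod_cast Dvd.intro _ hc.symm : (n : ℤ) ∣ R) h1)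
      rw [zpow_sub₀ h0] at h2
      unfold dds ffs
      rw [(div_eq_one_iff_eq (zpow_ne_zero _ h0)).mp h2, sub_self]
    rw [Finset.sum_congr rfl (fun j _ => hgood j (hall j))] at hTre
    simp at hTre
    omega
  obtain ⟨d, hd⟩ : ∃ d, d = Nat.gcd n R := ⟨_, rfl⟩
  have hd0 : 0 < d := hd ▸ Nat.gcd_pos_of_pos_left _ hn
  obtain ⟨N, hN⟩ : d ∣ n := hd ▸ Nat.gcd_dvd_left _ _
  obtain ⟨R', hR'⟩ : d ∣ R := hd ▸ Nat.gcd_dvd_right _ _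
  have hcop : Nat.Coprime N R' := by
    have : d * Nat.gcd N R' = d * 1 := by rw [← Nat.gcd_mul_left, ← hN, ← hR', ← hd, mul_one]
    exact Nat.eq_of_mul_eq_mul_left hd0 this
  have hN1 : N ≠ 1 := by
    rintro rfl
    exact hndvd ⟨R', by rw [hN, mul_one]; exact hR'⟩
  have hq := Nat.minFac_prime hN1
  have hqN := Nat.minFac_dvd N
  set q := Nat.minFac N
  have hqR' : ¬ q ∣ R' := fun hq' => by
    have := Nat.dvd_gcd hqN hq'
    rw [hcop] at this
    exact hq.one_lt.ne' (Nat.dvd_one.mp this)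
  obtain ⟨K, hK⟩ := hqN
  have hKd : (n : ℤ) ∣ (K : ℤ) * R * q := ⟨R', by
    rw [hN, hR', hK]; push_cast; ring⟩
  have hNR : N < R' := by
    rw [hN, hR'] at hnR; exact Nat.lt_of_mul_lt_mul_left hnR
  have hNd : (n : ℤ) ∣ (N : ℤ) * R := ⟨R', by
    rw [hN, hR']; push_cast; ring⟩
  -- q divides C
  have hqC : q ∣ C := by
    obtain ⟨V, hV⟩ := exists_val q hq
    choose y hy hy0 using fun j => wsum_res V hq hn h (Q j) hKd
    have hT2 : ∑ j ∈ range C, (((R' - N : ℕ) : V) + y j) = 0 := by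
      apply Subtype.ext
      have e : ∀ j, ((R - n : ℕ) : ℂ) + ∑ i ∈ range n, wws ω (Q j) R i
          = d * (((R' - N : ℕ) : ℂ) + ∑ i ∈ range (K * q), wws ω (Q j) R i) := by
        intro j
        have e1 : n = N * d := by rw [hN, mul_comm]
        have e2 : R - n = d * (R' - N) := by rw [hN, Nat.mul_sub, ← hR']
        have e3 := sum_periodic (K := N) (fun i : ℕ => wws ω (Q j) R i) (fun i => by
          push_cast; exact wws_per hn h (Q j) i N hNd) d
        rw [e2]
        conv_lhs => rw [e1, e3]
        rw [mul_comm K q, ← hK, nsmul_eq_mul]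
        push_cast; ring
      simp only [e, ← Finset.mul_sum] at hT
      have hT' := (mul_eq_zero.mp hT).resolve_left (by exact_mod_cast hd0.ne')
      simp only [← hy] at hT'
      push_cast
      simpa using hT'
    have hT3 := congrArg (IsLocalRing.residue V) hT2
    simp only [map_sum, map_add, hy0, map_natCast, map_zero, add_zero, Finset.sum_const,
      Finset.card_range, nsmul_eq_mul] at hT3
    rw [← Nat.cast_mul, CharP.cast_eq_zero_iff _ q] at hT3
    rcases hq.dvd_mul.mp hT3 with h1 | h1
    · exact h1
    · exfalso
      apply hqR'
      have : R' = (R' - N) + N := by omega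
      rw [this]
      exact dvd_add h1 ⟨K, hK⟩
  have hqR : q ∣ R := hqC.trans hCR
  have hqn : q ∣ n := hN ▸ (Dvd.intro K hK.symm).mul_left d
  obtain ⟨M, hM⟩ := hqn
  have hM' : n = M * q := by rw [hM, mul_comm]
  have hM0 : 0 < M := Nat.pos_of_ne_zero (by rintro rfl; simp at hM; omega)
  have hMq : (n : ℤ) ∣ (M : ℤ) * q := by rw [hM']; push_cast; exact dvd_rfl
  have hMR : (n : ℤ) ∣ (M : ℤ) * R := by
    obtain ⟨z, hz⟩ := hqR
    exact ⟨z, by rw [hM', hz]; push_cast; ring⟩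
  have hC2 : 2 ≤ C := hq.two_le.trans (Nat.le_of_dvd hC hqC)
  -- at most one exceptional column
  have huniq : ∀ j j', j < C → j' < C → j ≠ j' → (∃ i : ℕ, dds ω (Q j) R i ≠ 0) →
      (∃ i : ℕ, dds ω (Q j') R i ≠ 0) → False := by
    intro j j' hj hj' hjj hex hex'
    refine core hq hM0 hM' hd hR' hqR' hnR (fun i : ℕ => dds ω (Q j) R i)
      (fun i : ℕ => starRingEnd ℂ (dds ω (Q j') R ((n : ℤ) - 1 - i))) ?_ ?_ hex ?_ ?_
    · intro i
      push_cast
      exact dds_step hn h (Q j) i M hMq hMR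
    · intro i
      obtain ⟨v, hv, hv'⟩ := dds_step hn h (Q j') ((n : ℤ) - 1 - i) (-M) (by rw [neg_mul]; exact hMq.neg_right)
        (by rw [neg_mul]; exact hMR.neg_right)
      refine ⟨starRingEnd ℂ v, by rw [← map_pow, hv, map_one], ?_⟩
      beta_reduce
      rw [← map_mul, ← hv']
      congr 2
      push_cast; ring
    · obtain ⟨i, hi⟩ := hex'
      have hper : Function.Periodic (dds ω (Q j') R) (n : ℤ) := fun i => dds_per hn h (Q j') i
      refine ⟨i * (n - 1) + (n - 1), ?_⟩
      rw [Ne, map_eq_zero]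
      have h2 := hper.sub_zsmul_eq (i : ℤ) (x := (i : ℤ))
      have e : (n : ℤ) - 1 - ((i * (n - 1) + (n - 1) : ℕ) : ℤ) = i - (i : ℤ) • (n : ℤ) := by
        push_cast [Nat.cast_sub hn]
        rw [smul_eq_mul]; ring
      rw [e, h2]
      exact hi
    · intro ξ hξ
      rw [dds_rev_ft hn hR (Q j') ξ hξ, dds_ft hn h (Q j) ξ hξ, dds_ft hn h (Q j') ξ hξ, map_mul]
      have := ft_corr hR (fun i => ffs ω (Q j) i) (fun i => ffs ω (Q j') i) ξ hξ
      have hz := fun τ => hA.1 τ j j' hj hj' hjj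
      simp only [hz, zero_mul, Finset.sum_const_zero] at this
      linear_combination (-((1 - ξ ^ n) * ξ ^ (n - 1) * starRingEnd ℂ (1 - ξ ^ n))) * this
  by_cases hex : ∃ j, j < C ∧ ∃ i : ℕ, dds ω (Q j) R i ≠ 0
  · obtain ⟨j, hj, hji⟩ := hex
    rw [← Finset.add_sum_erase _ _ (Finset.mem_range.mpr hj)] at hTre
    rw [Finset.sum_congr (s₁ := (range C).erase j) rfl (g := fun _ => (R : ℝ))] at hTre
    · have := hbad j
      rw [Finset.sum_const, Finset.card_erase_of_mem (Finset.mem_range.mpr hj), Finset.card_range,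
        nsmul_eq_mul, Nat.cast_sub hC] at hTre
      have hC2r : (2 : ℝ) ≤ C := by exact_mod_cast hC2
      push_cast at hTre
      nlinarith
    · intro j' hj'
      apply hgood
      by_contra! hcon
      exact huniq j j' hj (Finset.mem_range.mp (Finset.mem_of_mem_erase hj'))
        (Finset.ne_of_mem_erase hj').symm hji hcon
  · push Not at hex
    rw [Finset.sum_congr rfl (fun j hj => hgood j (hex j (Finset.mem_range.mp hj)))] at hTre
    simp at hTre
    omega

/-- If the `R × C` array `S_{i,j} = ω^{p(i,j)}` (with `ω = e^{2πi/n}`, `p ∈ ℤ[x,y]`)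
has the Array Orthogonality Property for divisor `C`, then `R ≤ n`. -/
theorem aop_polynomial_row_bound (R C n : ℕ) (hR : 0 < R) (hC : 0 < C) (hn : 0 < n)
    (p : MvPolynomial (Fin 2) ℤ)
    (ω : ℂ) (hω : ω = Complex.exp (2 * Real.pi * Complex.I / n))
    (S : ℕ → ℕ → ℂ)
    (hS : ∀ i j : ℕ, S i j = ω ^ (MvPolynomial.eval ![(i : ℤ), (j : ℤ)] p))
    (hAOP : AOP R C S) : R ≤ n := by
  have h1 : ω ^ n = 1 := by
    rw [hω]; exact (Complex.isPrimitiveRoot_exp n hn.ne').pow_eq_one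
  let Q : ℕ → Polynomial ℤ := fun j => MvPolynomial.aeval ![Polynomial.X, Polynomial.C (j : ℤ)] p
  have hQ : ∀ (j : ℕ) (x : ℤ), (Q j).eval x = MvPolynomial.eval ![x, (j : ℤ)] p := by
    intro j x
    have e : (Polynomial.evalRingHom x).comp
        (MvPolynomial.aeval (R := ℤ) ![Polynomial.X, Polynomial.C (j : ℤ)]).toRingHom
        = MvPolynomial.eval ![x, (j : ℤ)] := by
      apply MvPolynomial.ringHom_ext
      · intro r; simp
      · intro i; fin_cases i <;> simp
    exact congrArg (fun g => g p) e
  have hS2 : S = fun (i : ℕ) (j : ℕ) => ffs ω (Q j) (i : ℤ) := by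
    funext i j
    rw [hS i j, ffs, hQ]
  rw [hS2] at hAOP
  exact main_abs hR hC hn h1 Q hAOP
end

section
/- Let s be a sequence of length L = R·C over K-th roots of unity with array entries S_{i,j} = ω^{⌊p(i,j)/n⌋}, where ω = e^{2πi/K}, p ∈ ℤ[x,y], and n ∈ ℤ⁺. If s possesses the Array Orthogonality Property for divisor C, then C ≤ nK and R ≤ nK, hence L ≤ n²K². -/
theorem ex_val (q : ℕ) (hq : q.Prime) : ∃ (V : ValuationSubring ℂ), V.valuation (q : ℂ) < 1 := by
  have hne : Ideal.span {(⟨(q:ℂ), ⟨(q:ℤ), by simp⟩⟩ : (Int.castRingHom ℂ).range)} ≠ ⊤ := by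
    intro h
    rw [Ideal.span_singleton_eq_top] at h
    obtain ⟨⟨b, m, hm⟩, hb⟩ := isUnit_iff_exists_inv.mp h
    have h1 := congrArg Subtype.val hb
    change (q:ℂ) * b = 1 at h1
    rw [← hm] at h1
    have h2 : (q:ℤ) * m = 1 := by
      have : (((q:ℤ) * m : ℤ) : ℂ) = ((1:ℤ):ℂ) := by push_cast; simpa using h1
      exact_mod_cast this
    have h3 := Int.eq_one_or_neg_one_of_mul_eq_one h2
    have := hq.two_le
    omega
  obtain ⟨B, -, h2⟩ := Ideal.image_subset_nonunits_valuationSubring _ hne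
  refine ⟨B, ?_⟩
  have := h2 ⟨_, Ideal.subset_span rfl, rfl⟩
  simpa [ValuationSubring.mem_nonunits_iff] using this

section val
variable {Γ : Type*} [LinearOrderedCommGroupWithZero Γ] (v : Valuation ℂ Γ)

theorem v_int (m : ℤ) : v (m : ℂ) ≤ 1 := by
  have : (m : ℂ) ∈ v.integer := intCast_mem _ m
  exact this

theorem v_root {η : ℂ} {m : ℕ} (hm : 0 < m) (h : η ^ m = 1) : v η = 1 := by
  have : (v η) ^ m = 1 := by rw [← map_pow, h, map_one]
  exact (pow_eq_one_iff.mp this).resolve_right hm.ne'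

theorem v_int_lt {q : ℕ} (hq : q.Prime) (hv : v (q : ℂ) < 1) {m : ℤ} (hm : v (m : ℂ) < 1) :
    (q : ℤ) ∣ m := by
  by_contra h
  have hc : IsCoprime (q : ℤ) m := (Prime.coprime_iff_not_dvd (Nat.prime_iff_prime_int.mp hq)).2 h
  obtain ⟨a, b, hab⟩ := hc
  have h1 : ((a : ℂ) * (q : ℂ) + (b : ℂ) * (m : ℂ)) = 1 := by exact_mod_cast hab
  have h2 : v ((a : ℂ) * (q : ℂ) + (b : ℂ) * (m : ℂ)) < 1 := by
    apply v.map_add_lt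
    · rw [map_mul]; exact (mul_le_of_le_one_left' (v_int v a)).trans_lt hv
    · rw [map_mul]; exact (mul_le_of_le_one_left' (v_int v b)).trans_lt hm
  rw [h1, map_one] at h2
  exact lt_irrefl _ h2

theorem v_pow_sub_one {η : ℂ} {m : ℕ} (hm : 0 < m) (h : η ^ m = 1) (a : ℕ) :
    v (η ^ a - 1) ≤ v (η - 1) := by
  rw [← mul_geom_sum, map_mul]
  refine mul_le_of_le_one_right' ?_
  refine v.map_sum_le fun i _ => ?_
  rw [map_pow, v_root v hm h, one_pow]

theorem v_lam {q : ℕ} (hq : q.Prime) (hv : v (q : ℂ) < 1) {ζ : ℂ} (hζ : IsPrimitiveRoot ζ q) :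
    v (ζ - 1) < 1 := by
  by_contra hcon
  have hge : 1 ≤ v (ζ - 1) := not_lt.mp hcon
  have hle : v (ζ - 1) ≤ 1 := by
    refine (v.map_sub _ _).trans ?_
    rw [v_root v hq.pos hζ.pow_eq_one, map_one, max_self]
  -- all the conjugates have valuation one
  have hall : ∀ k ∈ Finset.range (q - 1), v (1 - ζ ^ (k + 1)) = 1 := by
    intro k hk
    have hk : k + 1 < q := by have := Finset.mem_range.mp hk; omega
    have hcop : (k + 1).Coprime q :=
      ((hq.coprime_iff_not_dvd.mpr fun hd => by have := Nat.le_of_dvd (by omega) hd; omega).symm)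
    have hprim := hζ.pow_of_coprime _ hcop
    apply le_antisymm
    · refine (v.map_sub _ _).trans ?_
      rw [v_root v hq.pos hprim.pow_eq_one, map_one, max_self]
    · have : NeZero q := ⟨hq.ne_zero⟩
      obtain ⟨i, -, hi⟩ := hprim.eq_pow_of_pow_eq_one hζ.pow_eq_one
      rw [v.map_sub_swap]
      refine hge.trans ?_
      have := v_pow_sub_one v hq.pos hprim.pow_eq_one i
      rwa [hi] at this
  have hprod : ∏ k ∈ Finset.range (q - 1), (1 - ζ ^ (k + 1)) = (q : ℂ) := by
    have h2 := hq.two_le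
    obtain ⟨n, rfl⟩ : ∃ n, q = n + 1 := ⟨q - 1, by omega⟩
    have := hζ.prod_one_sub_pow_eq_order
    simpa using this
  have : v (q : ℂ) = 1 := by
    rw [← hprod, map_prod]
    exact Finset.prod_eq_one hall
  exact (this ▸ hv).false

/-- the key first order expansion -/
theorem v_exp {q : ℕ} (hq : q.Prime) (hv : v (q : ℂ) < 1) {ζ : ℂ} (hζ : IsPrimitiveRoot ζ q)
    (a : ℤ) : ∃ ε : ℂ, v ε < 1 ∧ ζ ^ a - 1 = (ζ - 1) * (a + ε) := by
  have hnat : ∀ b : ℕ, v (∑ k ∈ Finset.range b, ζ ^ k - b) < 1 := by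
    intro b
    have : ∑ k ∈ Finset.range b, ζ ^ k - b = ∑ k ∈ Finset.range b, (ζ ^ k - 1) := by simp
    rw [this]
    refine v.map_sum_lt one_ne_zero fun k _ => ?_
    exact (v_pow_sub_one v hq.pos hζ.pow_eq_one k).trans_lt (v_lam v hq hv hζ)
  have hz0 : ζ ≠ 0 := hζ.ne_zero hq.ne_zero
  have hq0 : (q : ℤ) ≠ 0 := by exact_mod_cast hq.ne_zero
  obtain ⟨b, hb⟩ := Int.eq_ofNat_of_zero_le (Int.emod_nonneg a hq0)
  have hab : a = b + q * (a / q) := by rw [← hb]; exact (Int.emod_add_mul_ediv a q).symm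
  have hza : ζ ^ a = ζ ^ b := by
    rw [hab, zpow_add₀ hz0, zpow_mul, zpow_natCast, zpow_natCast, hζ.pow_eq_one, one_zpow, mul_one]
  refine ⟨∑ k ∈ Finset.range b, ζ ^ k - a, ?_, ?_⟩
  · have : ∑ k ∈ Finset.range b, ζ ^ k - (a : ℂ)
        = (∑ k ∈ Finset.range b, ζ ^ k - b) - (q : ℂ) * ((a / q : ℤ) : ℂ) := by
      conv_lhs => rw [hab]
      push_cast; ring
    rw [this]
    refine v.map_sub_lt (hnat b) ?_
    rw [map_mul]
    exact (mul_le_of_le_one_right' (v_int v _)).trans_lt hv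
  · rw [hza, ← mul_geom_sum]; ring

theorem v_zpow_sub_one {q : ℕ} (hq : q.Prime) (hv : v (q : ℂ) < 1) {ζ : ℂ}
    (hζ : IsPrimitiveRoot ζ q) (a : ℤ) : v (ζ ^ a - 1) ≤ v (ζ - 1) := by
  obtain ⟨ε, h1, h2⟩ := v_exp v hq hv hζ a
  rw [h2, map_mul]
  exact mul_le_of_le_one_right' (v.map_add_le (v_int v a) h1.le)

theorem v_other {q ℓ : ℕ} (hq : q.Prime) (hv : v (q : ℂ) < 1) (hℓ : ℓ.Prime) (hne : ℓ ≠ q)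
    {ζ : ℂ} (hζ : IsPrimitiveRoot ζ ℓ) : ¬ v (ζ - 1) < 1 := by
  intro hlt
  have hs : ∑ k ∈ Finset.range ℓ, ζ ^ k = 0 := hζ.geom_sum_eq_zero hℓ.one_lt
  have h1 : v (∑ k ∈ Finset.range ℓ, ζ ^ k - ℓ) < 1 := by
    have : ∑ k ∈ Finset.range ℓ, ζ ^ k - ℓ = ∑ k ∈ Finset.range ℓ, (ζ ^ k - 1) := by simp
    rw [this]
    refine v.map_sum_lt one_ne_zero fun k _ => ?_
    exact (v_pow_sub_one v hℓ.pos hζ.pow_eq_one k).trans_lt hlt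
  rw [hs, zero_sub, Valuation.map_neg] at h1
  have := v_int_lt v hq hv (m := ℓ) (by exact_mod_cast h1)
  have := (Nat.prime_dvd_prime_iff_eq hq hℓ).mp (by exact_mod_cast this)
  exact hne this.symm

/-- roots of unity as close to one as a primitive `q`-th root have order dividing `q` -/
theorem v_order {q : ℕ} (hq : q.Prime) (hv : v (q : ℂ) < 1) {ζ η : ℂ} (hζ : IsPrimitiveRoot ζ q)
    {K : ℕ} (hK : 0 < K) (hη : η ^ K = 1) (h : v (η - 1) ≤ v (ζ - 1)) : η ^ q = 1 := by
  have hlam := v_lam v hq hv hζ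
  have hpos : 0 < orderOf η := orderOf_pos_iff.mpr (isOfFinOrder_iff_pow_eq_one.mpr ⟨K, hK, hη⟩)
  have hη1 : η ^ orderOf η = 1 := pow_orderOf_eq_one η
  set m := orderOf η with hm
  have hprim : IsPrimitiveRoot η m := IsPrimitiveRoot.orderOf η
  have honly : ∀ ℓ : ℕ, ℓ.Prime → ℓ ∣ m → ℓ = q := by
    intro ℓ hℓ hd
    by_contra hne
    obtain ⟨c, hc⟩ := hd
    have hp : IsPrimitiveRoot (η ^ c) ℓ := hprim.pow hpos (by rw [hc, mul_comm])
    exact v_other v hq hv hℓ hne hp ((v_pow_sub_one v hpos hη1 c).trans_lt (h.trans_lt hlam))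
  have hpw : m = q ^ m.primeFactorsList.length := 
    Nat.eq_prime_pow_of_unique_prime_dvd hpos.ne' (fun {d} hd hdm => honly d hd hdm)
  generalize m.primeFactorsList.length = s at hpw
  rcases Nat.lt_or_ge s 2 with hs | hs
  · rw [← orderOf_dvd_iff_pow_eq_one, ← hm, hpw]
    interval_cases s <;> simp
  · exfalso
    obtain ⟨u, rfl⟩ := Nat.exists_eq_add_of_le hs
    have hθ : IsPrimitiveRoot (η ^ (q ^ u)) (q ^ 2) :=
      hprim.pow hpos (by rw [hpw, pow_add, mul_comm])
    have hle := (v_pow_sub_one v hpos hη1 (q ^ u)).trans h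
    set θ := η ^ (q ^ u)
    have hθq : IsPrimitiveRoot (θ ^ q) q := hθ.pow (pow_pos hq.pos 2) (by ring)
    have : NeZero q := ⟨hq.ne_zero⟩
    obtain ⟨i, -, hi⟩ := hθq.eq_pow_of_pow_eq_one hζ.pow_eq_one
    have h1 : v (ζ - 1) ≤ v (θ ^ q - 1) := by
      have := v_pow_sub_one v hq.pos hθq.pow_eq_one i
      rwa [hi] at this
    have h2 : v (∑ k ∈ Finset.range q, θ ^ k) < 1 := by
      have : ∑ k ∈ Finset.range q, θ ^ k = ∑ k ∈ Finset.range q, (θ ^ k - 1) + q := by simp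
      rw [this]
      refine v.map_add_lt (v.map_sum_lt one_ne_zero fun k _ => ?_) hv
      exact (v_pow_sub_one v (pow_pos hq.pos 2) hθ.pow_eq_one k).trans_lt
        (hle.trans_lt hlam)
    have hne : v (θ - 1) ≠ 0 := by
      rw [Valuation.ne_zero_iff, sub_ne_zero]
      rintro h0
      rw [h0] at hθ
      have := hθ.eq_orderOf
      rw [orderOf_one] at this
      have := hq.two_le
      nlinarith
    have h3 : v (θ ^ q - 1) < v (θ - 1) := by
      rw [← mul_geom_sum, map_mul]
      exact mul_lt_of_lt_one_right (zero_lt_iff.mpr hne) h2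
    exact absurd (h1.trans_lt h3) (not_lt.mpr hle)
end val

section comb
variable {R : ℕ} [NeZero R]

theorem peak {D : ℕ} (hD : 2 * D ≤ R) (P Q : Finset (ZMod R)) (hP : P.Nonempty) (hQ : Q.Nonempty)
    (hPD : ∀ t ∈ P, t.val < D) (hQD : ∀ t ∈ Q, t.val < D) :
    ∃ t₁ ∈ P, ∃ τ : ZMod R, t₁ + τ ∈ Q ∧ ∀ t ∈ P, t + τ ∈ Q → t = t₁ := by
  obtain ⟨i, hi, himin⟩ := P.exists_min_image ZMod.val hP
  obtain ⟨k, hk, hkmax⟩ := Q.exists_max_image ZMod.val hQ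
  refine ⟨i, hi, k - i, by simpa using hk, fun t ht hs => ?_⟩
  have h1 := himin t ht
  have h2 := hkmax _ hs
  have h3 := hPD t ht
  have h4 := hQD _ hs
  have h5 := hPD i hi
  have h6 := hQD k hk
  have key : (t + (k - i)).val + i.val = k.val + t.val := by
    have e : (((t + (k - i)).val + i.val : ℕ) : ZMod R) = ((k.val + t.val : ℕ) : ZMod R) := by
      push_cast
      simp only [ZMod.natCast_val, ZMod.cast_id', id_eq]
      ring
    rw [ZMod.natCast_eq_natCast_iff', Nat.mod_eq_of_lt (by omega), Nat.mod_eq_of_lt (by omega)] at e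
    exact e
  exact ZMod.val_injective R (by omega)

theorem val_add_D {D : ℕ} (hD : 2 * D < R) (t : ZMod R) (ht : t.val < D) :
    (t + (D : ZMod R)).val = t.val + D := by
  have : t + (D : ZMod R) = ((t.val + D : ℕ) : ZMod R) := by
    push_cast; simp
  rw [this, ZMod.val_natCast, Nat.mod_eq_of_lt (by omega)]

theorem conv_diff {k : Type*} [CommRing k] (a b : ZMod R → k) (D τ : ZMod R) :
    ∑ t, (a t - a (t - D)) * (b (t + τ) - b (t + τ - D))
      = 2 * ∑ t, a t * b (t + τ) - ∑ t, a t * b (t + (τ - D)) - ∑ t, a t * b (t + (τ + D)) := by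
  have e1 : ∑ t, a (t - D) * b (t + τ) = ∑ t, a t * b (t + (τ + D)) := by
    rw [← Equiv.sum_comp (Equiv.addRight D)]
    refine Finset.sum_congr rfl fun t _ => ?_
    simp only [Equiv.coe_addRight]
    congr 2 <;> ring
  have e2 : ∑ t, a (t - D) * b (t + τ - D) = ∑ t, a t * b (t + τ) := by
    rw [← Equiv.sum_comp (Equiv.addRight D)]
    refine Finset.sum_congr rfl fun t _ => ?_
    simp only [Equiv.coe_addRight]
    congr 2 <;> ring
  have e3 : ∑ t, a t * b (t + τ - D) = ∑ t, a t * b (t + (τ - D)) := by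
    refine Finset.sum_congr rfl fun t _ => ?_
    congr 2; ring
  simp only [sub_mul, mul_sub, Finset.sum_sub_distrib]
  rw [e1, e2, e3]
  ring

theorem crossY {a b : ZMod R → ℂ} (h : ∀ τ, ∑ t, a t * (b (t + τ))⁻¹ = 0) (D τ : ZMod R) :
    ∑ t, (a t - a (t - D)) * ((b (t + τ))⁻¹ - (b (t + τ - D))⁻¹) = 0 := by
  rw [conv_diff a (fun t => (b t)⁻¹)]
  simp only [h]; ring

theorem diagY {C : ℕ} {X : Fin C → ZMod R → ℂ} (h0 : ∀ j t, X j t ≠ 0)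
    (h : ∀ τ ≠ 0, ∑ j, ∑ t, X j t * (X j (t + τ))⁻¹ = 0) (D τ : ZMod R) :
    ∑ j, ∑ t, (X j t - X j (t - D)) * ((X j (t + τ))⁻¹ - (X j (t + τ - D))⁻¹)
      = (R * C : ℂ) * (2 * (if τ = 0 then 1 else 0) - (if τ = D then 1 else 0)
          - (if τ = -D then 1 else 0)) := by
  have hA : ∀ τ : ZMod R, ∑ j, ∑ t, X j t * (X j (t + τ))⁻¹
      = (R * C : ℂ) * (if τ = 0 then 1 else 0) := by
    intro τ
    split_ifs with hτ
    · subst hτ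
      simp [h0, ZMod.card, mul_comm]
    · rw [h τ hτ, mul_zero]
  have e : ∀ j, ∑ t, (X j t - X j (t - D)) * ((X j (t + τ))⁻¹ - (X j (t + τ - D))⁻¹) = _ :=
    fun j => conv_diff (X j) (fun t => (X j t)⁻¹) D τ
  simp only [e]
  rw [Finset.sum_sub_distrib, Finset.sum_sub_distrib, ← Finset.mul_sum]
  rw [hA, hA, hA]
  simp only [sub_eq_zero, add_eq_zero_iff_eq_neg]
  ring

theorem v_inv_sub {Γ : Type*} [LinearOrderedCommGroupWithZero Γ] (v : Valuation ℂ Γ) {a b : ℂ}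
    (ha : v a = 1) (hb : v b = 1) : v (a⁻¹ - b⁻¹) = v (a - b) := by
  have ha0 : a ≠ 0 := by rintro rfl; simp at ha
  have hb0 : b ≠ 0 := by rintro rfl; simp at hb
  rw [inv_sub_inv ha0 hb0, map_div₀, map_mul, ha, hb, v.map_sub_swap]
  simp

theorem step_one {Γ : Type*} [LinearOrderedCommGroupWithZero Γ] (v : Valuation ℂ Γ)
    {C D : ℕ} (hD0 : 0 < D) (hD : 2 * D < R) (X : Fin C → ZMod R → ℂ)
    (hX : ∀ j t, v (X j t) = 1)
    (hcross : ∀ j k, j ≠ k → ∀ τ, ∑ t, X j t * (X k (t + τ))⁻¹ = 0)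
    (hdiag : ∀ τ ≠ 0, ∑ j, ∑ t, X j t * (X j (t + τ))⁻¹ = 0)
    (V₀ : Γ) (hout : ∀ j t, D ≤ t.val → v (X j t - X j (t - (D : ZMod R))) ≤ V₀) :
    ∀ j t, v (X j t - X j (t - (D : ZMod R))) ≤ V₀ := by
  set Y : Fin C → ZMod R → ℂ := fun j t => X j t - X j (t - (D : ZMod R)) with hY
  set Z : Fin C → ZMod R → ℂ := fun j t => (X j t)⁻¹ - (X j (t - (D : ZMod R)))⁻¹ with hZ
  have hZY : ∀ j t, v (Z j t) = v (Y j t) := fun j t => v_inv_sub v (hX _ _) (hX _ _)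
  have h0 : ∀ j t, X j t ≠ 0 := by
    intro j t h
    have := hX j t
    rw [h] at this
    simp at this
  have hcr : ∀ j k, j ≠ k → ∀ τ, ∑ t, Y j t * Z k (t + τ) = 0 := fun j k hjk τ =>
    crossY (hcross j k hjk) (D : ZMod R) τ
  have hdg : ∀ τ : ZMod R, ∑ j, ∑ t, Y j t * Z j (t + τ) = _ := fun τ =>
    diagY h0 hdiag (D : ZMod R) τ
  -- extremal behaviour
  have hmax : ∀ j, (∃ t, V₀ < v (Y j t)) → ∃ μ, V₀ < μ ∧ (∀ t, v (Y j t) ≤ μ) ∧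
      (Finset.univ.filter fun t => v (Y j t) = μ).Nonempty ∧
      ∀ t ∈ (Finset.univ.filter fun t => v (Y j t) = μ), t.val < D := by
    rintro j ⟨t, ht⟩
    obtain ⟨s, -, hs⟩ := Finset.exists_max_image Finset.univ (fun t => v (Y j t)) ⟨t, Finset.mem_univ t⟩
    have hlt : V₀ < v (Y j s) := ht.trans_le (hs t (Finset.mem_univ t))
    refine ⟨v (Y j s), hlt, fun t => hs t (Finset.mem_univ t), ⟨s, by simp⟩, fun u hu => ?_⟩
    by_contra hc
    have h1 := hout j u (not_lt.mp hc)
    have h2 : v (Y j u) = v (Y j s) := by simpa using hu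
    exact absurd (h2 ▸ hlt) (not_lt.mpr h1)
  have hpk : ∀ j k μ ν, V₀ < μ → V₀ < ν → (∀ t, v (Y j t) ≤ μ) → (∀ t, v (Y k t) ≤ ν) →
      (Finset.univ.filter fun t => v (Y j t) = μ).Nonempty →
      (Finset.univ.filter fun t => v (Y k t) = ν).Nonempty →
      (∀ t ∈ (Finset.univ.filter fun t => v (Y j t) = μ), t.val < D) →
      (∀ t ∈ (Finset.univ.filter fun t => v (Y k t) = ν), t.val < D) →
      ∃ τ, v (∑ t, Y j t * Z k (t + τ)) = μ * ν := by
    intro j k μ ν hμ hν hjμ hkν n1 n2 d1 d2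
    have hμ0 : 0 < μ := lt_of_le_of_lt zero_le hμ
    have hν0 : 0 < ν := lt_of_le_of_lt zero_le hν
    obtain ⟨t₁, ht₁, τ, hτ, huniq⟩ := peak hD.le _ _ n1 n2 d1 d2
    simp only [Finset.mem_filter, Finset.mem_univ, true_and] at ht₁ hτ huniq
    refine ⟨τ, ?_⟩
    rw [← Finset.add_sum_erase _ _ (Finset.mem_univ t₁)]
    have hmain : v (Y j t₁ * Z k (t₁ + τ)) = μ * ν := by rw [map_mul, hZY, ht₁, hτ]
    rw [Valuation.map_add_eq_of_lt_left, hmain]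
    rw [hmain]
    refine v.map_sum_lt (mul_ne_zero hμ0.ne' hν0.ne') fun t ht => ?_
    rw [map_mul, hZY]
    have hne : t ≠ t₁ := (Finset.mem_erase.mp ht).1
    rcases (hjμ t).lt_or_eq with h1 | h1
    · exact (mul_le_mul_right (hkν _) _).trans_lt (mul_lt_mul_of_pos_right h1 hν0)
    · rcases (hkν (t + τ)).lt_or_eq with h2 | h2
      · rw [h1]; exact mul_lt_mul_of_pos_left h2 hμ0
      · exact absurd (huniq t h1 h2) hne
  -- at most one bad column
  have hone : ∀ j k, j ≠ k → (∃ t, V₀ < v (Y j t)) → ∀ t, v (Y k t) ≤ V₀ := by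
    intro j k hjk hj
    by_contra hk
    push Not at hk
    obtain ⟨μ, hμ, a1, a2, a3⟩ := hmax j hj
    obtain ⟨ν, hν, b1, b2, b3⟩ := hmax k hk
    obtain ⟨τ, hτ⟩ := hpk j k μ ν hμ hν a1 b1 a2 b2 a3 b3
    rw [hcr j k hjk, map_zero] at hτ
    exact mul_ne_zero (lt_of_le_of_lt zero_le hμ).ne' (lt_of_le_of_lt zero_le hν).ne' hτ.symm
  by_contra hcon
  push Not at hcon
  obtain ⟨j, hj⟩ := hcon
  obtain ⟨μ, hμ, a1, a2, a3⟩ := hmax j hj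
  have hμ0 : 0 < μ := lt_of_le_of_lt zero_le hμ
  obtain ⟨τ, hτ⟩ := hpk j j μ μ hμ hμ a1 a1 a2 a2 a3 a3
  have hVμ : V₀ * V₀ < μ * μ :=
    (mul_le_mul_right hμ.le _).trans_lt (mul_lt_mul_of_pos_right hμ hμ0)
  have hrest : ∀ τ : ZMod R, v (∑ k ∈ Finset.univ.erase j, ∑ t, Y k t * Z k (t + τ)) < μ * μ := by
    intro τ
    refine v.map_sum_lt (mul_ne_zero hμ0.ne' hμ0.ne') fun k hk => ?_
    refine v.map_sum_lt (mul_ne_zero hμ0.ne' hμ0.ne') fun t _ => ?_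
    have := hone j k (Finset.mem_erase.mp hk).1.symm hj
    rw [map_mul, hZY]
    exact (mul_le_mul' (this t) (this _)).trans_lt hVμ
  have hDne : ((D : ℕ) : ZMod R) ≠ 0 := by
    intro h
    have := Nat.le_of_dvd hD0 ((ZMod.natCast_eq_zero_iff _ _).mp h)
    omega
  have hDne2 : ((D : ℕ) : ZMod R) ≠ -(D : ZMod R) := by
    intro h
    have h' : ((2 * D : ℕ) : ZMod R) = 0 := by
      push_cast
      linear_combination h
    have := Nat.le_of_dvd (by omega) ((ZMod.natCast_eq_zero_iff _ _).mp h')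
    omega
  have hRC : v (R * C : ℂ) < μ * μ := by
    have h1 := hdg (D : ZMod R)
    rw [if_neg hDne, if_pos rfl, if_neg hDne2] at h1
    have h2 : (R * C : ℂ) = - ∑ j, ∑ t, Y j t * Z j (t + (D : ZMod R)) := by rw [h1]; ring
    rw [h2, Valuation.map_neg, ← Finset.add_sum_erase _ _ (Finset.mem_univ j)]
    refine v.map_add_lt ?_ (hrest _)
    refine v.map_sum_lt (mul_ne_zero hμ0.ne' hμ0.ne') fun t _ => ?_
    rw [map_mul, hZY]
    rcases (a1 t).lt_or_eq with h1 | h1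
    · exact (mul_le_mul_right (a1 _) _).trans_lt (mul_lt_mul_of_pos_right h1 hμ0)
    · rcases (a1 (t + (D : ZMod R))).lt_or_eq with h2 | h2
      · rw [h1]; exact mul_lt_mul_of_pos_left h2 hμ0
      · exfalso
        have c1 := a3 t (by simpa using h1)
        have c2 := a3 (t + (D : ZMod R)) (by simpa using h2)
        rw [val_add_D hD t c1] at c2
        omega
  have h3 := hdg τ
  rw [← Finset.add_sum_erase _ _ (Finset.mem_univ j)] at h3
  have h4 : v (∑ t, Y j t * Z j (t + τ) + ∑ k ∈ Finset.univ.erase j, ∑ t, Y k t * Z k (t + τ))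
      = μ * μ := by
    rw [Valuation.map_add_eq_of_lt_left, hτ]
    rw [hτ]; exact hrest τ
  rw [h3, map_mul] at h4
  have h5 : v (2 * (if τ = 0 then 1 else 0) - (if τ = (D : ZMod R) then 1 else 0)
          - (if τ = -(D : ZMod R) then 1 else 0) : ℂ) ≤ 1 := by
    have := v_int v (2 * (if τ = 0 then 1 else 0) - (if τ = (D : ZMod R) then 1 else 0)
          - (if τ = -(D : ZMod R) then 1 else 0))
    push_cast at this
    exact this
  have h6 := (mul_le_of_le_one_right' h5 : v (R * C : ℂ) * _ ≤ _).trans_lt hRC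
  rw [h4] at h6
  exact lt_irrefl _ h6
end comb

section main
/-- the data of the problem, moved to exponents -/
structure Setup (R C n K : ℕ) [NeZero R] (F : Fin C → ℕ → ℤ) (ω : ℂ) : Prop where
  hn : 0 < n
  hK : 0 < K
  hC : 0 < C
  lt : n * K < R
  prim : IsPrimitiveRoot ω K
  cross : ∀ j k : Fin C, j ≠ k → ∀ τ : ZMod R,
    ∑ t : ZMod R, ω ^ F j t.val * (ω ^ F k (t + τ).val)⁻¹ = 0
  diag : ∀ τ : ZMod R, τ ≠ 0 →
    ∑ j, ∑ t : ZMod R, ω ^ F j t.val * (ω ^ F j (t + τ).val)⁻¹ = 0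
  quot : ∀ m q : ℕ, ∀ j, ∃ d : ℕ → ℤ,
    (∀ i, F j (i + n * m) - F j i = m * d i) ∧ ∀ i, (q : ℤ) ∣ d (i + q) - d i

variable {R C n K : ℕ} [NeZero R] {F : Fin C → ℕ → ℤ} {ω : ℂ}

theorem Setup.per (s : Setup R C n K F ω) (m : ℕ) (j : Fin C) (i : ℕ) :
    (m : ℤ) ∣ F j (i + n * m) - F j i := by
  obtain ⟨d, h, -⟩ := s.quot m 1 j
  exact ⟨d i, h i⟩

theorem Setup.ne0 (s : Setup R C n K F ω) : ω ≠ 0 := s.prim.ne_zero s.hK.ne'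

theorem Setup.eq_of_dvd (s : Setup R C n K F ω) {a b : ℤ} (h : (K : ℤ) ∣ a - b) :
    ω ^ a = ω ^ b := by
  have h1 := (s.prim.zpow_eq_one_iff_dvd (a - b)).mpr h
  rw [zpow_sub₀ s.ne0, div_eq_one_iff_eq (zpow_ne_zero _ s.ne0)] at h1
  exact h1

theorem val_sub_ge {D : ℕ} (t : ZMod R) (h : D ≤ t.val) :
    (t - (D : ZMod R)).val = t.val - D := by
  have e : t - (D : ZMod R) = ((t.val - D : ℕ) : ZMod R) := by
    rw [Nat.cast_sub h]; simp
  rw [e, ZMod.val_natCast, Nat.mod_eq_of_lt]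
  have := t.val_lt
  omega

theorem val_sub_lt {D : ℕ} (hD : D < R) (t : ZMod R) (h : t.val < D) :
    (t - (D : ZMod R)).val = t.val + R - D := by
  have e : t - (D : ZMod R) = ((t.val + R - D : ℕ) : ZMod R) := by
    rw [Nat.cast_sub (by omega)]; simp
  rw [e, ZMod.val_natCast, Nat.mod_eq_of_lt]
  omega

theorem Setup.finish (s : Setup R C n K F ω)
    (h : ∀ j i, (K : ℤ) ∣ F j (i + R) - F j i) : False := by
  have hN : ((n * K : ℕ) : ZMod R) ≠ 0 := by
    intro h0
    have := Nat.le_of_dvd (Nat.mul_pos s.hn s.hK) ((ZMod.natCast_eq_zero_iff _ _).mp h0)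
    have := s.lt
    omega
  have h1 := s.diag _ hN
  have key : ∀ j (t : ZMod R), ω ^ F j t.val * (ω ^ F j (t + ((n * K : ℕ) : ZMod R)).val)⁻¹ = 1 := by
    intro j t
    have hne := zpow_ne_zero (F j t.val) s.ne0
    have : ω ^ F j (t + ((n * K : ℕ) : ZMod R)).val = ω ^ F j t.val := by
      apply s.eq_of_dvd
      have e : t + ((n * K : ℕ) : ZMod R) = ((t.val + n * K : ℕ) : ZMod R) := by
        push_cast; simp
      rw [e, ZMod.val_natCast]
      have hp := s.per K j t.val
      have hlt := s.lt
      have ht := t.val_lt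
      rcases lt_or_ge (t.val + n * K) R with hc | hc
      · rw [Nat.mod_eq_of_lt hc]; exact hp
      · have e2 : (t.val + n * K) % R = t.val + n * K - R := by
          rw [Nat.mod_eq_sub_mod hc, Nat.mod_eq_of_lt (by omega)]
        have h3 := h j (t.val + n * K - R)
        rw [Nat.sub_add_cancel hc] at h3
        rw [e2]
        obtain ⟨a, ha⟩ := hp
        obtain ⟨b, hb⟩ := h3
        exact ⟨a - b, by linear_combination ha - hb⟩
    rw [this, mul_inv_cancel₀ hne]
  simp only [key] at h1
  simp only [Finset.sum_const, Finset.card_univ, ZMod.card, Fintype.card_fin, nsmul_eq_mul,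
    mul_one] at h1
  have hC := s.hC
  have hR := NeZero.ne R
  rcases mul_eq_zero.mp h1 with h2 | h2
  · have : C = 0 := by exact_mod_cast h2
    omega
  · have : R = 0 := by exact_mod_cast h2
    omega

/-- the ambient facts for a prime factor -/
theorem Setup.arith (s : Setup R C n K F ω) {q M : ℕ} (hq : q.Prime) (hM : K = q * M) :
    0 < M ∧ 0 < n * M ∧ 2 * (n * M) < R ∧ n * K = q * (n * M) ∧ IsPrimitiveRoot (ω ^ M) q := by
  have hK := s.hK
  have hn := s.hn
  have h2 := hq.two_le
  have hM0 : 0 < M := by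
    rcases Nat.eq_zero_or_pos M with h | h
    · subst h; omega
    · exact h
  have e : n * K = q * (n * M) := by rw [hM]; ring
  have hlt := s.lt
  refine ⟨hM0, Nat.mul_pos hn hM0, ?_, e, s.prim.pow hK (by rw [hM]; ring)⟩
  have := Nat.mul_le_mul_right (n * M) h2
  omega

theorem Setup.step1 (s : Setup R C n K F ω) {q M : ℕ} (hq : q.Prime) (hM : K = q * M)
    (j : Fin C) (t : ZMod R) :
    (M : ℤ) ∣ F j t.val - F j (t - ((n * M : ℕ) : ZMod R)).val := by
  obtain ⟨hM0, hD0, hD, -, hζ⟩ := s.arith hq hM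
  obtain ⟨V, hv⟩ := ex_val q hq
  set v := V.valuation
  have h0 := s.ne0
  have hvω : v ω = 1 := v_root v s.hK s.prim.pow_eq_one
  have hvz : ∀ a : ℤ, v (ω ^ a) = 1 := fun a => by rw [map_zpow₀, hvω, one_zpow]
  have hfac : ∀ a b : ℤ, ω ^ a - ω ^ b = ω ^ b * (ω ^ (a - b) - 1) := by
    intro a b
    rw [mul_sub, ← zpow_add₀ h0]; simp
  have hvf : ∀ a b : ℤ, v (ω ^ a - ω ^ b) = v (ω ^ (a - b) - 1) := by
    intro a b
    rw [hfac, map_mul, hvz, one_mul]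
  have h := step_one v hD0 hD (fun j t => ω ^ F j t.val) (fun j t => hvz _) s.cross s.diag
    (v (ω ^ M - 1)) (fun j t ht => by
      rw [hvf, val_sub_ge t ht]
      obtain ⟨d, hd⟩ := s.per M j (t.val - n * M)
      rw [Nat.sub_add_cancel ht] at hd
      rw [hd, zpow_mul, zpow_natCast]
      exact v_zpow_sub_one v hq hv hζ d) j t
  rw [hvf] at h
  have h1 : (ω ^ (F j t.val - F j (t - ((n * M : ℕ) : ZMod R)).val)) ^ K = 1 := by
    rw [← zpow_natCast, ← zpow_mul, mul_comm, zpow_mul, zpow_natCast, s.prim.pow_eq_one, one_zpow]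
  have h2 := v_order v hq hv hζ s.hK h1 h
  rw [← zpow_natCast, ← zpow_mul, s.prim.zpow_eq_one_iff_dvd, hM] at h2
  rw [show ((q * M : ℕ) : ℤ) = (M : ℤ) * q by push_cast; ring] at h2
  exact (mul_dvd_mul_iff_right (by exact_mod_cast hq.ne_zero : (q : ℤ) ≠ 0)).mp h2

theorem Setup.step1' (s : Setup R C n K F ω) {q M : ℕ} (hq : q.Prime) (hM : K = q * M)
    (j : Fin C) (i : ℕ) : (M : ℤ) ∣ F j (i + R) - F j i := by
  obtain ⟨hM0, hD0, hD, -, hζ⟩ := s.arith hq hM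
  induction i using Nat.strong_induction_on with
  | _ i ih =>
    rcases lt_or_ge i (n * M) with hi | hi
    · have h1 := s.step1 hq hM j (i : ZMod R)
      have hiv : (i : ZMod R).val = i := by
        rw [ZMod.val_natCast, Nat.mod_eq_of_lt (by omega)]
      rw [val_sub_lt (by omega) _ (by rw [hiv]; exact hi), hiv] at h1
      have h2 := s.per M j (i + R - n * M)
      rw [Nat.sub_add_cancel (by omega)] at h2
      obtain ⟨a, ha⟩ := h2
      obtain ⟨b, hb⟩ := h1
      exact ⟨a - b, by linear_combination ha - hb⟩
    · have h1 := ih (i - n * M) (by omega)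
      have h2 := s.per M j (i - n * M)
      have h3 := s.per M j (i - n * M + R)
      rw [Nat.sub_add_cancel hi] at h2
      rw [show i - n * M + R + n * M = i + R by omega] at h3
      obtain ⟨a, ha⟩ := h1
      obtain ⟨b, hb⟩ := h2
      obtain ⟨c, hc⟩ := h3
      exact ⟨a + c - b, by linear_combination ha + hc - hb⟩

theorem Setup.two_primes (s : Setup R C n K F ω) {q ℓ : ℕ} (hq : q.Prime) (hℓ : ℓ.Prime)
    (hne : q ≠ ℓ) (hqK : q ∣ K) (hℓK : ℓ ∣ K) : False := by
  obtain ⟨M, hM⟩ := hqK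
  obtain ⟨L, hL⟩ := hℓK
  refine s.finish fun j i => ?_
  have h1 := mul_dvd_mul_left (q : ℤ) (s.step1' hq hM j i)
  have h2 := mul_dvd_mul_left (ℓ : ℤ) (s.step1' hℓ hL j i)
  rw [← Nat.cast_mul, ← hM] at h1
  rw [← Nat.cast_mul, ← hL] at h2
  have hc : IsCoprime (q : ℤ) (ℓ : ℤ) :=
    Nat.isCoprime_iff_coprime.mpr ((Nat.coprime_primes hq hℓ).mpr hne)
  obtain ⟨a, b, hab⟩ := hc
  obtain ⟨x, hx⟩ := h1
  obtain ⟨y, hy⟩ := h2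
  exact ⟨a * x + b * y, by linear_combination (-(F j (i + R) - F j i)) * hab + a * hx + b * hy⟩
end main

section comb2
variable {R : ℕ} [NeZero R] {k : Type*} [Field k]

theorem per_mod {q : ℕ} {β : Type*} {d : ℕ → β} (h : ∀ i, d (i + q) = d i) {a b : ℕ}
    (hab : a % q = b % q) : d a = d b := by
  have h1 : ∀ u i, d (i + q * u) = d i := by
    intro u
    induction u with
    | zero => intro i; simp
    | succ u ih => intro i; rw [Nat.mul_succ, ← add_assoc, h, ih]
  rw [← Nat.mod_add_div a q, ← Nat.mod_add_div b q, h1, h1, hab]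

theorem gzero {q D : ℕ} (hq : 0 < q) {g : ZMod R → k} (hg : ∀ τ, g (τ + (q : ZMod R)) = g τ)
    (h0 : ∀ m : ℕ, D ≤ m → m < D + q → g (m : ZMod R) = 0) (τ : ZMod R) : g τ = 0 := by
  have hp : ∀ i : ℕ, (fun i : ℕ => g (i : ZMod R)) (i + q) = (fun i : ℕ => g (i : ZMod R)) i := by
    intro i
    simp only [Nat.cast_add]
    exact hg _
  have hle : D ≤ q * D := Nat.le_mul_of_pos_left D hq
  set r := (τ.val + q * D - D) % q with hr
  have h1 : (τ.val) % q = (D + r) % q := by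
    rw [hr, Nat.add_mod_mod, show D + (τ.val + q * D - D) = τ.val + q * D by omega,
      Nat.add_mul_mod_self_left]
  have h2 := per_mod (d := fun i : ℕ => g (i : ZMod R)) hp h1
  simp only [ZMod.natCast_val, ZMod.cast_id', id_eq] at h2
  rw [h2]
  exact h0 _ (by omega) (by have := Nat.mod_lt (τ.val + q * D - D) hq; omega)

theorem Wzero {D : ℕ} {c c' : ZMod R → k} (hc : ∀ t, D ≤ t.val → c t = 0)
    (hc' : ∀ t, D ≤ t.val → c' t = 0) {m : ℕ} (h1 : D ≤ m) (h2 : m + D ≤ R) :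
    ∑ t, c t * c' (t + (m : ZMod R)) = 0 := by
  refine Finset.sum_eq_zero fun t _ => ?_
  rcases lt_or_ge t.val D with ht | ht
  · rw [hc' (t + (m : ZMod R)), mul_zero]
    have : t + (m : ZMod R) = ((t.val + m : ℕ) : ZMod R) := by push_cast; simp
    rw [this, ZMod.val_natCast, Nat.mod_eq_of_lt (by omega)]
    omega
  · rw [hc t ht, zero_mul]

theorem gper {q : ℕ} {c c' e e' : ZMod R → k} (he : ∀ t, e (t + (q : ZMod R)) = e t)
    (he' : ∀ t, e' (t + (q : ZMod R)) = e' t) (τ : ZMod R) :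
    (∑ t, (c t + e t) * (c' (t + (τ + (q : ZMod R))) + e' (t + (τ + (q : ZMod R))))
      - ∑ t, c t * c' (t + (τ + (q : ZMod R))))
    = (∑ t, (c t + e t) * (c' (t + τ) + e' (t + τ)) - ∑ t, c t * c' (t + τ)) := by
  have key : ∀ τ : ZMod R, (∑ t, (c t + e t) * (c' (t + τ) + e' (t + τ)) - ∑ t, c t * c' (t + τ))
      = ∑ t, (c t + e t) * e' (t + τ) + ∑ t, e (t - τ) * c' t := by
    intro τ
    have : ∑ t, e (t - τ) * c' t = ∑ t, e t * c' (t + τ) := by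
      rw [← Equiv.sum_comp (Equiv.addRight τ)]
      simp
    rw [this, ← Finset.sum_sub_distrib, ← Finset.sum_add_distrib]
    exact Finset.sum_congr rfl fun t _ => by ring
  have hem : ∀ t, e (t - (q : ZMod R)) = e t := fun t => by
    rw [← he (t - (q : ZMod R))]; simp
  rw [key, key]
  congr 1
  · refine Finset.sum_congr rfl fun t _ => ?_
    rw [← add_assoc, he']
  · refine Finset.sum_congr rfl fun t _ => ?_
    rw [← sub_sub, hem]

theorem conv_zero {D : ℕ} (hD : 2 * D < R) {c c' : ZMod R → k} (hc : ∀ t, D ≤ t.val → c t = 0)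
    (hc' : ∀ t, D ≤ t.val → c' t = 0) (h : ∀ τ, ∑ t, c t * c' (t + τ) = 0) :
    (∀ t, c t = 0) ∨ (∀ t, c' t = 0) := by
  classical
  by_contra hcon
  push Not at hcon
  obtain ⟨⟨a, ha⟩, ⟨b, hb⟩⟩ := hcon
  obtain ⟨t₁, ht₁, τ, hτ, hu⟩ := peak hD.le (Finset.univ.filter fun t => c t ≠ 0)
    (Finset.univ.filter fun t => c' t ≠ 0) ⟨a, by simpa using ha⟩ ⟨b, by simpa using hb⟩
    (fun t ht => by
      by_contra h1
      exact (by simpa using ht : c t ≠ 0) (hc t (not_lt.mp h1)))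
    (fun t ht => by
      by_contra h1
      exact (by simpa using ht : c' t ≠ 0) (hc' t (not_lt.mp h1)))
  simp only [Finset.mem_filter, Finset.mem_univ, true_and] at ht₁ hτ hu
  have h1 := h τ
  rw [Finset.sum_eq_single t₁] at h1
  · exact mul_ne_zero ht₁ hτ h1
  · intro t _ hne
    by_contra h2
    exact hne (hu t (left_ne_zero_of_mul h2) (right_ne_zero_of_mul h2))
  · simp

/-- two orthogonal columns -/
theorem comb_cross {q D : ℕ} (hq : 0 < q) (hD : 2 * D < R) (hDq : D + q + D ≤ R)
    {c c' e e' : ZMod R → k} (he : ∀ t, e (t + (q : ZMod R)) = e t)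
    (he' : ∀ t, e' (t + (q : ZMod R)) = e' t)
    (hc : ∀ t, D ≤ t.val → c t = 0) (hc' : ∀ t, D ≤ t.val → c' t = 0)
    (h : ∀ τ, ∑ t, (c t + e t) * (c' (t + τ) + e' (t + τ)) = 0) :
    (∀ t, c t = 0) ∨ (∀ t, c' t = 0) := by
  apply conv_zero hD hc hc'
  intro τ
  have h1 := gzero (D := D) hq
    (g := fun τ => ∑ t, (c t + e t) * (c' (t + τ) + e' (t + τ)) - ∑ t, c t * c' (t + τ))
    (gper he he') (fun m h1 h2 => by
      rw [h, Wzero hc hc' h1 (by omega), sub_zero]) τ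
  rw [h, zero_sub, neg_eq_zero] at h1
  exact h1

/-- the diagonal -/
theorem comb_diag {q D C : ℕ} (hq : 0 < q) (hD0 : 0 < D) (hD : 2 * D < R) (hDq : D + q + D < R)
    {c e : Fin C → ZMod R → k} (he : ∀ j t, e j (t + (q : ZMod R)) = e j t)
    (hc : ∀ j t, D ≤ t.val → c j t = 0)
    (hone : ∀ i j, i ≠ j → (∀ t, c i t = 0) ∨ (∀ t, c j t = 0))
    (h : ∀ τ : ZMod R, τ ≠ 0 → τ ≠ (D : ZMod R) → τ ≠ -(D : ZMod R) →
      ∑ j, ∑ t, (c j t + e j t) * (c j (t + τ) + e j (t + τ)) = 0)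
    (hall : ∑ j, ∑ t, (c j t + e j t) * (c j (t + (D : ZMod R)) + e j (t + (D : ZMod R))) = 0 →
      ∀ τ : ZMod R, ∑ j, ∑ t, (c j t + e j t) * (c j (t + τ) + e j (t + τ)) = 0) :
    ∀ j t, c j t = 0 := by
  set B : ZMod R → k := fun τ => ∑ j, ∑ t, (c j t + e j t) * (c j (t + τ) + e j (t + τ)) with hB
  set W : ZMod R → k := fun τ => ∑ j, ∑ t, c j t * c j (t + τ) with hW
  have hg : ∀ τ, B (τ + (q : ZMod R)) - W (τ + (q : ZMod R)) = B τ - W τ := by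
    intro τ
    simp only [hB, hW, ← Finset.sum_sub_distrib (s := (Finset.univ : Finset (Fin C)))]
    exact Finset.sum_congr rfl fun j _ => gper (he j) (he j) τ
  have hW0 : ∀ m : ℕ, D ≤ m → m + D ≤ R → W (m : ZMod R) = 0 := fun m h1 h2 =>
    Finset.sum_eq_zero fun j _ => Wzero (hc j) (hc j) h1 h2
  have hB0 : ∀ m : ℕ, D < m → m + D < R → B (m : ZMod R) = 0 := by
    intro m h1 h2
    have hval : (m : ZMod R).val = m := by rw [ZMod.val_natCast, Nat.mod_eq_of_lt (by omega)]
    have hval2 : ((D : ℕ) : ZMod R).val = D := by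
      rw [ZMod.val_natCast, Nat.mod_eq_of_lt (by omega)]
    refine h _ ?_ ?_ ?_
    · intro h0
      rw [h0, ZMod.val_zero] at hval
      omega
    · intro h0
      rw [h0, hval2] at hval
      omega
    · intro h0
      have h' : ((m + D : ℕ) : ZMod R) = 0 := by
        push_cast
        rw [h0]; ring
      have := Nat.le_of_dvd (by omega) ((ZMod.natCast_eq_zero_iff _ _).mp h')
      omega
  have hBD : B (D : ZMod R) = 0 := by
    have h1 := hg (D : ZMod R)
    have e1 : (D : ZMod R) + (q : ZMod R) = ((D + q : ℕ) : ZMod R) := by push_cast; rfl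
    rw [e1, hB0 _ (by omega) (by omega), hW0 _ (by omega) (by omega),
      hW0 D le_rfl (by omega)] at h1
    simpa using h1.symm
  have hBall := hall hBD
  have hWall : ∀ τ, W τ = 0 := by
    intro τ
    have h1 := gzero (D := D) hq (g := fun τ => B τ - W τ) hg (fun m h1 h2 => by
      rw [hW0 m h1 (by omega), sub_zero]; exact hBall _) τ
    have h2 : B τ = 0 := hBall τ
    rw [h2, zero_sub, neg_eq_zero] at h1
    exact h1
  by_contra hcon
  push Not at hcon
  obtain ⟨j, u, hu⟩ := hcon
  have hoth : ∀ i, i ≠ j → ∀ t, c i t = 0 := fun i hi =>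
    (hone i j hi).resolve_right (fun h => hu (h u))
  have : ∀ τ, ∑ t, c j t * c j (t + τ) = 0 := by
    intro τ
    have h1 := hWall τ
    simp only [hW] at h1
    rw [Finset.sum_eq_single j] at h1
    · exact h1
    · intro i _ hi
      exact Finset.sum_eq_zero fun t _ => by rw [hoth i hi t, zero_mul]
    · simp
  rcases conv_zero hD (hc j) (hc j) this with h1 | h1 <;> exact hu (h1 u)
end comb2

section steptwo
variable {R C n K : ℕ} [NeZero R] {F : Fin C → ℕ → ℤ} {ω : ℂ}

theorem v_omega {Γ : Type*} [LinearOrderedCommGroupWithZero Γ] (v : Valuation ℂ Γ)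
    {q e : ℕ} (hq : q.Prime) (hv : v (q : ℂ) < 1) {η : ℂ} (h : η ^ (q ^ e) = 1) :
    v (η - 1) < 1 := by
  have hvη : v η = 1 := v_root v (pow_pos hq.pos e) h
  have hle : v (η - 1) ≤ 1 := by
    refine (v.map_sub _ _).trans ?_
    rw [hvη, map_one, max_self]
  obtain ⟨r, hr⟩ := exists_add_pow_prime_pow_eq hq (⟨η - 1, hle⟩ : v.integer) 1 e
  have h1 := congrArg Subtype.val hr
  have h2 : (η - 1 + 1) ^ q ^ e = (η - 1) ^ q ^ e + 1 ^ q ^ e + (q : ℂ) * (η - 1) * 1 * (r : ℂ) := by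
    simpa using h1
  rw [sub_add_cancel, h, one_pow] at h2
  have h3 : (η - 1) ^ q ^ e = - ((q : ℂ) * ((η - 1) * (r : ℂ))) := by linear_combination -h2
  have h4 : (v (η - 1)) ^ q ^ e < 1 := by
    rw [← map_pow, h3, Valuation.map_neg, map_mul, map_mul]
    refine (mul_le_of_le_one_right' ?_).trans_lt hv
    exact mul_le_one' hle r.2
  by_contra hcon
  have : v (η - 1) = 1 := le_antisymm hle (not_lt.mp hcon)
  rw [this, one_pow] at h4
  exact lt_irrefl _ h4

theorem Setup.lin (s : Setup R C n K F ω) {Γ : Type*} [LinearOrderedCommGroupWithZero Γ]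
    (v : Valuation ℂ Γ) {q M e : ℕ} (hq : q.Prime) (hv : v (q : ℂ) < 1) (hM : K = q * M)
    (hKe : K = q ^ e) {a b δ : ℤ} (h : a - b = M * δ) :
    ∃ ε, v ε < 1 ∧ ω ^ a - ω ^ b = (ω ^ M - 1) * (δ + ε) := by
  obtain ⟨-, -, -, -, hζ⟩ := s.arith hq hM
  have h0 := s.ne0
  obtain ⟨ε, h1, h2⟩ := v_exp v hq hv hζ δ
  have hvb : v (ω ^ b) = 1 := by
    rw [map_zpow₀, v_root v s.hK s.prim.pow_eq_one, one_zpow]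
  have hvb1 : v (ω ^ b - 1) < 1 := by
    apply v_omega v hq hv (e := e)
    rw [← hKe, ← zpow_natCast, ← zpow_mul, mul_comm, zpow_mul, zpow_natCast, s.prim.pow_eq_one,
      one_zpow]
  refine ⟨(ω ^ b - 1) * δ + ω ^ b * ε, v.map_add_lt ?_ ?_, ?_⟩
  · rw [map_mul]; exact (mul_le_of_le_one_right' (v_int v δ)).trans_lt hvb1
  · rw [map_mul, hvb, one_mul]; exact h1
  · have : ω ^ a = ω ^ b * (ω ^ M) ^ δ := by
      rw [← zpow_natCast, ← zpow_mul, ← h, ← zpow_add₀ h0]; simp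
    rw [this]
    linear_combination ω ^ b * h2

/-- first order expansion of the correlations of the differences -/
theorem Setup.corr (s : Setup R C n K F ω) {Γ : Type*} [LinearOrderedCommGroupWithZero Γ]
    (v : Valuation ℂ Γ) {q M e : ℕ} (hq : q.Prime) (hv : v (q : ℂ) < 1) (hM : K = q * M)
    (hKe : K = q ^ e) {δ : Fin C → ZMod R → ℤ} {D : ZMod R}
    (hδ : ∀ j t, F j t.val - F j (t - D).val = M * δ j t) (j k : Fin C) (τ : ZMod R) :
    ∃ ε, v ε < 1 ∧ ∑ t : ZMod R, (ω ^ F j t.val - ω ^ F j (t - D).val) *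
        ((ω ^ F k (t + τ).val)⁻¹ - (ω ^ F k (t + τ - D).val)⁻¹)
      = -(ω ^ M - 1) ^ 2 * (((∑ t, δ j t * δ k (t + τ) : ℤ) : ℂ) + ε) := by
  have h1 : ∀ t, ∃ ε, v ε < 1 ∧ (ω ^ F j t.val - ω ^ F j (t - D).val) *
        ((ω ^ F k (t + τ).val)⁻¹ - (ω ^ F k (t + τ - D).val)⁻¹)
      = -(ω ^ M - 1) ^ 2 * (((δ j t * δ k (t + τ) : ℤ) : ℂ) + ε) := by
    intro t
    obtain ⟨ε, hε, e1⟩ := s.lin v hq hv hM hKe (hδ j t)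
    obtain ⟨η, hη, e2⟩ := s.lin v hq hv hM hKe
      (a := -F k (t + τ).val) (b := -F k (t + τ - D).val) (δ := -δ k (t + τ))
      (by linear_combination -hδ k (t + τ))
    rw [zpow_neg, zpow_neg] at e2
    refine ⟨-(δ j t * η) + ε * δ k (t + τ) - ε * η, ?_, ?_⟩
    · refine v.map_sub_lt (v.map_add_lt ?_ ?_) ?_
      · rw [Valuation.map_neg, map_mul]
        exact (mul_le_of_le_one_left' (v_int v _)).trans_lt hη
      · rw [map_mul]
        exact (mul_le_of_le_one_right' (v_int v _)).trans_lt hε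
      · rw [map_mul]
        exact (mul_le_of_le_one_right' hη.le).trans_lt hε
    · rw [e1, e2]
      push_cast
      ring
  choose ε hε he using h1
  refine ⟨∑ t, ε t, v.map_sum_lt one_ne_zero fun t _ => hε t, ?_⟩
  rw [Finset.sum_congr rfl fun t _ => he t, ← Finset.mul_sum, Finset.sum_add_distrib]
  push_cast
  rfl

theorem Setup.dvdR (s : Setup R C n K F ω) {q e : ℕ} (hq : q.Prime) (hKe : K = q ^ e) :
    q ∣ R := by
  obtain ⟨V, hv⟩ := ex_val q hq
  set v := V.valuation
  have h0 := s.ne0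
  have hC := s.hC
  have hlt := s.lt
  have hnK := Nat.mul_pos s.hn s.hK
  have hex : ∃ (j k : Fin C) (τ : ZMod R),
      ∑ t : ZMod R, ω ^ F j t.val * (ω ^ F k (t + τ).val)⁻¹ = 0 := by
    rcases Nat.lt_or_ge 1 C with h1 | h1
    · exact ⟨⟨0, hC⟩, ⟨1, h1⟩, 0, s.cross _ _ (by simp [Fin.ext_iff]) 0⟩
    · have : C = 1 := by omega
      subst this
      refine ⟨0, 0, 1, ?_⟩
      have : Fact (1 < R) := ⟨by omega⟩
      have := s.diag 1 one_ne_zero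
      simpa using this
  obtain ⟨j, k, τ, h⟩ := hex
  have h1 : v ((R : ℤ) : ℂ) < 1 := by
    have e1 : ((R : ℤ) : ℂ) = - ∑ t : ZMod R, (ω ^ F j t.val * (ω ^ F k (t + τ).val)⁻¹ - 1) := by
      rw [Finset.sum_sub_distrib, h]
      simp [ZMod.card]
    rw [e1, Valuation.map_neg]
    refine v.map_sum_lt one_ne_zero fun t _ => ?_
    apply v_omega v hq hv (e := e)
    rw [← hKe, ← zpow_neg, ← zpow_add₀ h0, ← zpow_natCast, ← zpow_mul, mul_comm, zpow_mul,
      zpow_natCast, s.prim.pow_eq_one, one_zpow]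
  exact_mod_cast v_int_lt v hq hv h1

theorem Setup.step2 (s : Setup R C n K F ω) {q M e : ℕ} (hq : q.Prime) (hM : K = q * M)
    (hKe : K = q ^ e) :
    (∀ j k, j ≠ k → (∀ i, (K : ℤ) ∣ F j (i + R) - F j i) ∨ (∀ i, (K : ℤ) ∣ F k (i + R) - F k i)) ∧
    (n * M + q + n * M < R → ∀ j i, (K : ℤ) ∣ F j (i + R) - F j i) := by
  obtain ⟨hM0, hD0, hD, hN, hζ⟩ := s.arith hq hM
  have hqR := s.dvdR hq hKe
  have hlt := s.lt
  have : Fact q.Prime := ⟨hq⟩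
  have h2 := hq.two_le
  obtain ⟨V, hv⟩ := ex_val q hq
  set v := V.valuation
  set D := n * M with hDdef
  have hst := fun j t => s.step1 hq hM j t
  choose δ hδ using hst
  choose d hd hdq using fun j => s.quot M q j
  have hdz : ∀ j i, ((d j (i + q) : ℤ) : ZMod q) = ((d j i : ℤ) : ZMod q) := by
    intro j i
    rw [← sub_eq_zero, ← Int.cast_sub, ZMod.intCast_zmod_eq_zero_iff_dvd]
    exact hdq j i
  have hdm : ∀ j a b, a % q = b % q → ((d j a : ℤ) : ZMod q) = ((d j b : ℤ) : ZMod q) :=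
    fun j a b h => per_mod (d := fun i => ((d j i : ℤ) : ZMod q)) (hdz j) h
  set E : Fin C → ZMod R → ZMod q := fun j t => ((d j (t.val + (q - 1) * D) : ℤ) : ZMod q) with hE
  set c : Fin C → ZMod R → ZMod q := fun j t => ((δ j t : ℤ) : ZMod q) - E j t with hc
  have hEq : ∀ j t, E j (t + (q : ZMod R)) = E j t := by
    intro j t
    apply hdm
    have e1 : t + (q : ZMod R) = ((t.val + q : ℕ) : ZMod R) := by push_cast; simp
    rw [e1, ZMod.val_natCast, Nat.add_mod, Nat.mod_mod_of_dvd _ hqR, Nat.add_mod_right,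
      ← Nat.add_mod]
  have hqD : (q - 1) * D + D = q * D := by
    rw [← Nat.succ_mul]; congr 1; omega
  have hcD : ∀ j t, D ≤ t.val → c j t = 0 := by
    intro j t ht
    have h1 := hδ j t
    rw [val_sub_ge t ht] at h1
    have h3 := hd j (t.val - D)
    rw [Nat.sub_add_cancel ht, h1] at h3
    have h4 : δ j t = d j (t.val - D) := by
      have : (M : ℤ) ≠ 0 := by exact_mod_cast hM0.ne'
      exact mul_left_cancel₀ this h3
    simp only [hc, hE, h4]
    rw [sub_eq_zero]
    apply hdm
    rw [show t.val + (q - 1) * D = t.val - D + q * D by omega, Nat.add_mul_mod_self_left]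
  have hcE : ∀ j t, c j t + E j t = ((δ j t : ℤ) : ZMod q) := by
    intro j t; simp [hc]
  -- vanishing of `c` gives periodicity
  have hper : ∀ j, (∀ t, c j t = 0) → ∀ i, (K : ℤ) ∣ F j (i + R) - F j i := by
    intro j h0 i
    have hKM : (K : ℤ) = M * q := by rw [hM]; push_cast; ring
    induction i using Nat.strong_induction_on with
    | _ i ih =>
      rcases lt_or_ge i D with hi | hi
      · have h1 := hδ j (i : ZMod R)
        have hiv : (i : ZMod R).val = i := by
          rw [ZMod.val_natCast, Nat.mod_eq_of_lt (by omega)]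
        rw [val_sub_lt (by omega) _ (by rw [hiv]; exact hi), hiv] at h1
        have h3 := hd j (i + R - D)
        rw [Nat.sub_add_cancel (by omega)] at h3
        have h4 := h0 (i : ZMod R)
        simp only [hc, hE, hiv] at h4
        have h5 : ((d j (i + (q - 1) * D) : ℤ) : ZMod q) = ((d j (i + R - D) : ℤ) : ZMod q) := by
          apply hdm
          obtain ⟨w, hw⟩ := hqR
          have e1 : (i + (q - 1) * D) + q * w = (i + R - D) + q * D := by omega
          have := congrArg (· % q) e1
          simpa [Nat.add_mul_mod_self_left] using this
        rw [h5, ← Int.cast_sub, ZMod.intCast_zmod_eq_zero_iff_dvd] at h4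
        obtain ⟨w, hw⟩ := h4
        refine ⟨-w, ?_⟩
        rw [hKM]
        linear_combination h3 - h1 - M * hw
      · have h1 := ih (i - D) (by omega)
        have h3 := hd j (i - D)
        have h4 := hd j (i - D + R)
        rw [Nat.sub_add_cancel hi] at h3
        rw [show i - D + R + n * M = i + R by omega] at h4
        have h5 : ((d j (i - D + R) : ℤ) : ZMod q) = ((d j (i - D) : ℤ) : ZMod q) := by
          apply hdm
          obtain ⟨w, hw⟩ := hqR
          rw [hw, Nat.add_mul_mod_self_left]
        rw [← sub_eq_zero, ← Int.cast_sub, ZMod.intCast_zmod_eq_zero_iff_dvd] at h5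
        obtain ⟨w, hw⟩ := h5
        obtain ⟨u, hu⟩ := h1
        refine ⟨u + w, ?_⟩
        rw [hKM] at hu ⊢
        linear_combination h4 - h3 + M * hw + hu
  have hDq : D + q + D ≤ R := by
    obtain ⟨w, hw⟩ := hqR
    have h5 : D < w := by
      have : q * D < q * w := by omega
      exact Nat.lt_of_mul_lt_mul_left this
    have h6 : q * (D + 1) ≤ q * w := Nat.mul_le_mul_left q h5
    have h7 := Nat.mul_le_mul_right D h2
    rw [Nat.mul_add] at h6
    omega
  have hlam0 : (ω ^ M - 1) ^ 2 ≠ 0 := pow_ne_zero 2 (sub_ne_zero.mpr (hζ.ne_one hq.one_lt))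
  have hcast : ∀ j k τ, ∑ t, (c j t + E j t) * (c k (t + τ) + E k (t + τ))
      = ((∑ t, δ j t * δ k (t + τ) : ℤ) : ZMod q) := by
    intro j k τ
    push_cast
    exact Finset.sum_congr rfl fun t _ => by rw [hcE, hcE]
  have hcross : ∀ j k, j ≠ k → (∀ t, c j t = 0) ∨ (∀ t, c k t = 0) := by
    intro j k hjk
    refine comb_cross hq.pos hD hDq (hEq j) (hEq k) (hcD j) (hcD k) fun τ => ?_
    rw [hcast, ZMod.intCast_zmod_eq_zero_iff_dvd]
    obtain ⟨ε, hε, h3⟩ := s.corr v hq hv hM hKe hδ j k τ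
    rw [crossY (a := fun t => ω ^ F j t.val) (b := fun t => ω ^ F k t.val)
      (s.cross j k hjk)] at h3
    have h4 := (mul_eq_zero.mp h3.symm).resolve_left (neg_ne_zero.mpr hlam0)
    apply v_int_lt v hq hv
    rw [add_eq_zero_iff_eq_neg.mp h4, Valuation.map_neg]
    exact hε
  refine ⟨fun j k hjk => (hcross j k hjk).imp (hper j) (hper k), fun hgap j => hper j ?_⟩
  -- the diagonal
  have hdg : ∀ τ : ZMod R, ∃ ε, v ε < 1 ∧
      (R * C : ℂ) * (2 * (if τ = 0 then 1 else 0) - (if τ = (D : ZMod R) then 1 else 0)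
          - (if τ = -(D : ZMod R) then 1 else 0))
      = -(ω ^ M - 1) ^ 2 * (((∑ j, ∑ t, δ j t * δ j (t + τ) : ℤ) : ℂ) + ε) := by
    intro τ
    choose ε hε h3 using fun j => s.corr v hq hv hM hKe hδ j j τ
    refine ⟨∑ j, ε j, v.map_sum_lt one_ne_zero fun j _ => hε j, ?_⟩
    rw [← diagY (X := fun j t => ω ^ F j t.val) (fun j t => zpow_ne_zero _ s.ne0) s.diag]
    rw [Finset.sum_congr rfl fun j _ => h3 j, ← Finset.mul_sum, Finset.sum_add_distrib]
    push_cast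
    rfl
  have hcastd : ∀ τ, ∑ j, ∑ t, (c j t + E j t) * (c j (t + τ) + E j (t + τ))
      = ((∑ j, ∑ t, δ j t * δ j (t + τ) : ℤ) : ZMod q) := by
    intro τ
    rw [Int.cast_sum]
    exact Finset.sum_congr rfl fun j _ => hcast j j τ
  refine comb_diag hq.pos hD0 hD hgap hEq hcD hcross ?_ ?_ j
  · intro τ h1 h3 h4
    rw [hcastd, ZMod.intCast_zmod_eq_zero_iff_dvd]
    obtain ⟨ε, hε, h5⟩ := hdg τ
    rw [if_neg h1, if_neg h3, if_neg h4] at h5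
    have h6 := (mul_eq_zero.mp (h5.symm.trans (by ring))).resolve_left (neg_ne_zero.mpr hlam0)
    apply v_int_lt v hq hv
    rw [add_eq_zero_iff_eq_neg.mp h6, Valuation.map_neg]
    exact hε
  · intro h1 τ
    rw [hcastd, ZMod.intCast_zmod_eq_zero_iff_dvd] at h1 ⊢
    have hDne : ((D : ℕ) : ZMod R) ≠ 0 := by
      intro h
      have := Nat.le_of_dvd hD0 ((ZMod.natCast_eq_zero_iff _ _).mp h)
      omega
    have hDne2 : ((D : ℕ) : ZMod R) ≠ -(D : ZMod R) := by
      intro h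
      have h' : ((2 * D : ℕ) : ZMod R) = 0 := by
        push_cast
        linear_combination h
      have := Nat.le_of_dvd (by omega) ((ZMod.natCast_eq_zero_iff _ _).mp h')
      omega
    obtain ⟨ε, hε, h5⟩ := hdg (D : ZMod R)
    rw [if_neg hDne, if_pos rfl, if_neg hDne2] at h5
    have hB : v (((∑ j, ∑ t, δ j t * δ j (t + (D : ZMod R)) : ℤ) : ℂ) + ε) < 1 := by
      refine v.map_add_lt ?_ hε
      obtain ⟨w, hw⟩ := h1
      rw [hw]
      push_cast
      rw [map_mul]
      exact (mul_le_of_le_one_right' (v_int v w)).trans_lt hv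
    obtain ⟨η, hη, h6⟩ := hdg τ
    have h7 : ((∑ j, ∑ t, δ j t * δ j (t + τ) : ℤ) : ℂ)
        = - ((((∑ j, ∑ t, δ j t * δ j (t + (D : ZMod R)) : ℤ) : ℂ) + ε) *
          ((2 * (if τ = 0 then 1 else 0) - (if τ = (D : ZMod R) then 1 else 0)
          - (if τ = -(D : ZMod R) then 1 else 0) : ℤ) : ℂ)) - η := by
      apply mul_left_cancel₀ (neg_ne_zero.mpr hlam0)
      have e1 : (((2 * (if τ = 0 then 1 else 0) - (if τ = (D : ZMod R) then 1 else 0)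
          - (if τ = -(D : ZMod R) then 1 else 0) : ℤ) : ℂ)) =
          (2 * (if τ = 0 then 1 else 0) - (if τ = (D : ZMod R) then 1 else 0)
          - (if τ = -(D : ZMod R) then 1 else 0)) := by push_cast; rfl
      rw [e1]
      generalize (2 * (if τ = 0 then 1 else 0) - (if τ = (D : ZMod R) then 1 else 0)
          - (if τ = -(D : ZMod R) then 1 else 0) : ℂ) = x at h6 ⊢
      linear_combination -h6 - x * h5
    apply v_int_lt v hq hv
    rw [h7]
    refine v.map_sub_lt ?_ hη
    rw [Valuation.map_neg, map_mul]
    exact (mul_le_of_le_one_right' (v_int v _)).trans_lt hB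
end steptwo

section special
variable {R C n K : ℕ} [NeZero R] {F : Fin C → ℕ → ℤ} {ω : ℂ}

theorem sum_zmod_range (G : ℕ → ℕ → ℂ) (m : ℕ) :
    ∑ t : ZMod R, G t.val (t + (m : ZMod R)).val
      = ∑ i ∈ Finset.range R, G i ((i + m) % R) := by
  refine Finset.sum_bij (fun t _ => t.val) ?_ ?_ ?_ ?_
  · intro t _; exact Finset.mem_range.mpr t.val_lt
  · intro a _ b _ h; exact ZMod.val_injective R h
  · intro b hb
    refine ⟨(b : ZMod R), Finset.mem_univ _, ?_⟩
    rw [ZMod.val_natCast, Nat.mod_eq_of_lt (Finset.mem_range.mp hb)]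
  · intro t _
    have e : t + (m : ZMod R) = ((t.val + m : ℕ) : ZMod R) := by push_cast; simp
    rw [e, ZMod.val_natCast]

theorem Setup.norm_term (s : Setup R C n K F ω) (a b : ℤ) : ‖ω ^ a * (ω ^ b)⁻¹‖ = 1 := by
  have h : ‖ω‖ = 1 := Complex.norm_eq_one_of_pow_eq_one s.prim.pow_eq_one s.hK.ne'
  rw [norm_mul, norm_inv, norm_zpow, norm_zpow, h]
  simp

theorem Setup.special (s : Setup R C n K F ω) {M e : ℕ} (hM : K = 2 * M) (hKe : K = 2 ^ e)
    (hRN : R = n * K + 2) : False := by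
  obtain ⟨hM0, hD0, hD, hN, hζ⟩ := s.arith Nat.prime_two hM
  obtain ⟨hA, -⟩ := s.step2 Nat.prime_two hM hKe
  have hω0 := s.ne0
  by_cases hall : ∀ j i, (K : ℤ) ∣ F j (i + R) - F j i
  · exact s.finish hall
  push Not at hall
  obtain ⟨j0, i0, hbad⟩ := hall
  have hgood : ∀ j, j ≠ j0 → ∀ i, (K : ℤ) ∣ F j (i + R) - F j i := fun j hj =>
    (hA j j0 hj).resolve_right (fun h => hbad (h i0))
  set D := n * M with hDdef
  have hcorr : ∀ j (m : ℕ), ∑ t : ZMod R, ω ^ F j t.val * (ω ^ F j (t + (m : ZMod R)).val)⁻¹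
      = ∑ i ∈ Finset.range R, ω ^ F j i * (ω ^ F j ((i + m) % R))⁻¹ := fun j m =>
    sum_zmod_range (fun a b => ω ^ F j a * (ω ^ F j b)⁻¹) m
  have hdiag : ∀ m : ℕ, 0 < m → m < R →
      ∑ j, ∑ i ∈ Finset.range R, ω ^ F j i * (ω ^ F j ((i + m) % R))⁻¹ = 0 := by
    intro m h1 h2
    rw [← s.diag (m : ZMod R) (fun h => by
      have := Nat.le_of_dvd h1 ((ZMod.natCast_eq_zero_iff _ _).mp h)
      omega)]
    exact Finset.sum_congr rfl fun j _ => (hcorr j m).symm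
  have hw : ∀ j i, (K : ℤ) ∣ F j (i + 2 * D) - F j i := by
    intro j i
    rw [← hN]; exact s.per K j i
  have hRD : R = 2 * D + 2 := by omega
  -- good columns
  have hg1 : ∀ j, j ≠ j0 →
      ∑ i ∈ Finset.range R, ω ^ F j i * (ω ^ F j ((i + 2) % R))⁻¹ = R := by
    intro j hj
    have : ∀ i ∈ Finset.range R, ω ^ F j i * (ω ^ F j ((i + 2) % R))⁻¹ = 1 := by
      intro i hi
      have hi := Finset.mem_range.mp hi
      have e : ω ^ F j ((i + 2) % R) = ω ^ F j i := by
        apply s.eq_of_dvd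
        have h1 := hgood j hj i
        have h2 := hw j (i + 2)
        rw [show i + R = i + 2 + 2 * D by omega] at h1
        rcases lt_or_ge (i + 2) R with hc | hc
        · rw [Nat.mod_eq_of_lt hc]
          have := dvd_sub h1 h2
          rwa [sub_sub_sub_cancel_left] at this
        · rw [Nat.mod_eq_sub_mod hc, Nat.mod_eq_of_lt (by omega)]
          have h3 := hgood j hj (i + 2 - R)
          rw [Nat.sub_add_cancel hc] at h3
          obtain ⟨x, hx⟩ := h1
          obtain ⟨y, hy⟩ := h2
          obtain ⟨z, hz⟩ := h3
          exact ⟨x - y - z, by linear_combination hx - hy - hz⟩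
      rw [e, mul_inv_cancel₀ (zpow_ne_zero _ hω0)]
    rw [Finset.sum_congr rfl this]
    simp
  have hwrap : ∀ i, ω ^ F j0 (i + 2 * D) * (ω ^ F j0 i)⁻¹ = 1 := by
    intro i
    rw [s.eq_of_dvd (hw j0 i), mul_inv_cancel₀ (zpow_ne_zero _ hω0)]
  have hb1 : -(R : ℝ) < (∑ i ∈ Finset.range R, ω ^ F j0 i * (ω ^ F j0 ((i + 2) % R))⁻¹).re := by
    have e : -(R : ℝ) = ∑ i ∈ Finset.range R, (-1 : ℝ) := by simp
    rw [e, Complex.re_sum]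
    refine Finset.sum_lt_sum ?_ ⟨2 * D, Finset.mem_range.mpr (by omega), ?_⟩
    · intro i _
      have h1 := Complex.abs_re_le_norm (ω ^ F j0 i * (ω ^ F j0 ((i + 2) % R))⁻¹)
      rw [s.norm_term] at h1
      exact (abs_le.mp h1).1
    · have e2 : (2 * D + 2) % R = 0 := by rw [← hRD, Nat.mod_self]
      have := hwrap 0
      rw [zero_add] at this
      rw [e2, this]
      norm_num
  have hsing : ∀ j, j = j0 := by
    by_contra hcon
    push Not at hcon
    obtain ⟨j1, hj1⟩ := hcon
    have h1 := congrArg Complex.re (hdiag 2 (by omega) (by omega))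
    rw [Complex.re_sum, ← Finset.add_sum_erase _ _ (Finset.mem_univ j0)] at h1
    have h2 : (R : ℝ) ≤ ∑ j ∈ Finset.univ.erase j0,
        (∑ i ∈ Finset.range R, ω ^ F j i * (ω ^ F j ((i + 2) % R))⁻¹).re := by
      have h3 : ((∑ i ∈ Finset.range R, ω ^ F j1 i * (ω ^ F j1 ((i + 2) % R))⁻¹).re) ≤
        ∑ j ∈ Finset.univ.erase j0,
        (∑ i ∈ Finset.range R, ω ^ F j i * (ω ^ F j ((i + 2) % R))⁻¹).re := by
        refine Finset.single_le_sum (f := fun j =>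
          (∑ i ∈ Finset.range R, ω ^ F j i * (ω ^ F j ((i + 2) % R))⁻¹).re) ?_
          (Finset.mem_erase.mpr ⟨hj1, Finset.mem_univ _⟩)
        intro j hj
        simp only [hg1 j (Finset.mem_erase.mp hj).1]
        simp
      rw [hg1 j1 hj1] at h3
      simpa using h3
    simp only [Complex.zero_re] at h1
    linarith
  have hd1 : ∀ m : ℕ, 0 < m → m < R →
      ∑ i ∈ Finset.range R, ω ^ F j0 i * (ω ^ F j0 ((i + m) % R))⁻¹ = 0 := by
    intro m h1 h2
    have h3 := hdiag m h1 h2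
    rw [Finset.sum_eq_single j0] at h3
    · exact h3
    · intro j _ hj; exact absurd (hsing j) hj
    · simp
  clear hdiag hsing hb1 hg1 hcorr hgood hA
  set f := F j0 with hf
  obtain ⟨d, hd, hd2⟩ := s.quot M 2 j0
  rw [← hf] at hd
  have hKM : (K : ℤ) = 2 * M := by rw [hM]; push_cast; ring
  have hMz : (M : ℤ) ≠ 0 := by exact_mod_cast hM0.ne'
  have hσ : ∀ i, (M : ℤ) ∣ f (i + 2) - f i := by
    intro i
    have h1 := s.step1' Nat.prime_two hM j0 i
    have h2 : (M : ℤ) ∣ F j0 (i + 2 + 2 * D) - F j0 (i + 2) :=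
      (Dvd.intro_left 2 hKM.symm).trans (hw j0 (i + 2))
    rw [show i + R = i + 2 + 2 * D by omega] at h1
    have := dvd_sub h1 h2
    rwa [sub_sub_sub_cancel_left] at this
  choose σ hσ using hσ
  have hneg : ω ^ M = -1 := hζ.eq_neg_one_of_two_right
  have hterm : ∀ a b c : ℤ, b - a = M * c → ω ^ a * (ω ^ b)⁻¹ = (-1 : ℂ) ^ c := by
    intro a b c h
    have h1 : ω ^ b = ω ^ a * (-1 : ℂ) ^ c := by
      rw [← hneg, ← zpow_natCast, ← zpow_mul, ← h, ← zpow_add₀ hω0]; simp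
    have h2 : (-1 : ℂ) ^ c * (-1 : ℂ) ^ c = 1 := by
      rw [← mul_zpow]; simp
    have h3 : (-1 : ℂ) ^ c ≠ 0 := left_ne_zero_of_mul_eq_one h2
    rw [h1]
    field_simp [zpow_ne_zero a hω0]
    rw [pow_two]
    exact h2.symm
  have hpar : ∀ a b : ℤ, (2 : ℤ) ∣ a - b → (-1 : ℂ) ^ a = (-1 : ℂ) ^ b := by
    intro a b ⟨w, h⟩
    rw [show a = b + 2 * w by omega, zpow_add₀ (by norm_num), zpow_mul]
    norm_num
  have hσD : ∀ i, (-1 : ℂ) ^ σ (D + i) = (-1 : ℂ) ^ σ i := by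
    intro i
    apply hpar
    have h1 : σ (D + i) - σ i = d (i + 2) - d i := by
      apply mul_left_cancel₀ hMz
      have e1 := hσ (D + i)
      have e2 := hσ i
      have e3 := hd (i + 2)
      have e4 := hd i
      rw [show D + i + 2 = i + 2 + n * M by omega, show D + i = i + n * M by omega] at e1
      rw [show D + i = i + n * M by omega]
      linear_combination e2 - e1 + e3 - e4
    rw [h1]; exact hd2 i
  -- shift two
  have hsum : ∑ i ∈ Finset.range D, (-1 : ℂ) ^ σ i = -1 := by
    have h1 := hd1 2 (by omega) (by omega)
    rw [hRD, Finset.sum_range_succ, Finset.sum_range_succ] at h1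
    have e1 : (2 * D + 2) % (2 * D + 2) = 0 := Nat.mod_self _
    have e2 : (2 * D + 1 + 2) % (2 * D + 2) = 1 := by
      rw [show 2 * D + 1 + 2 = 1 + (2 * D + 2) by omega, Nat.add_mod_right,
        Nat.mod_eq_of_lt (by omega)]
    have w0 := hwrap 0
    have w1 := hwrap 1
    rw [zero_add] at w0
    rw [add_comm 1] at w1
    rw [e1, e2, w0, w1] at h1
    have h2 : ∑ i ∈ Finset.range (2 * D), ω ^ f i * (ω ^ f ((i + 2) % (2 * D + 2)))⁻¹
        = ∑ i ∈ Finset.range (2 * D), (-1 : ℂ) ^ σ i := by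
      refine Finset.sum_congr rfl fun i hi => ?_
      have hi := Finset.mem_range.mp hi
      rw [Nat.mod_eq_of_lt (by omega)]
      exact hterm _ _ _ (hσ i)
    rw [h2, two_mul, Finset.sum_range_add, Finset.sum_congr rfl fun i _ => hσD i] at h1
    linear_combination h1 / 2
  have hodd : Odd D := by
    set u : ℕ → ℤ := fun i => if Even (σ i) then 1 else -1 with hu
    have h1 : ∀ i, ((u i : ℤ) : ℂ) = (-1 : ℂ) ^ σ i := by
      intro i
      simp only [hu]
      split_ifs with h
      · rw [h.neg_one_zpow]; simp
      · rw [(Int.not_even_iff_odd.mp h).neg_one_zpow]; simp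
    have h2 : ∑ i ∈ Finset.range D, u i = -1 := by
      have : ((∑ i ∈ Finset.range D, u i : ℤ) : ℂ) = ((-1 : ℤ) : ℂ) := by
        rw [Int.cast_sum, Finset.sum_congr rfl fun i _ => h1 i, hsum]; simp
      exact_mod_cast this
    have h3 : (2 : ℤ) ∣ ∑ i ∈ Finset.range D, (u i - 1) := by
      refine Finset.dvd_sum fun i _ => ?_
      simp only [hu]
      split_ifs <;> norm_num
    rw [Finset.sum_sub_distrib, h2] at h3
    simp only [Finset.sum_const, Finset.card_range, nsmul_eq_mul, mul_one] at h3
    rw [Nat.odd_iff]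
    omega
  have hd2' : ∀ k i, (2 : ℤ) ∣ d (i + 2 * k) - d i := by
    intro k i
    induction k with
    | zero => simp
    | succ k ih =>
      have := hd2 (i + 2 * k)
      have h := dvd_add this ih
      rw [show i + 2 * (k + 1) = i + 2 * k + 2 by omega]
      simpa using h
  have hd1' : ∀ i, (2 : ℤ) ∣ d (i + 1) - d i := by
    intro i
    obtain ⟨k, hk⟩ := hodd
    have h1 := hw j0 i
    have h2 := hd i
    have h3 := hd (i + n * M)
    rw [show i + n * M + n * M = i + 2 * D by omega] at h3
    rw [← hf, show f (i + 2 * D) - f i = M * (d (i + n * M) + d i) by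
      linear_combination h2 + h3, hKM, mul_comm (2 : ℤ)] at h1
    have h4 := (mul_dvd_mul_iff_left hMz).mp h1
    have h5 := hd2' k (i + 1)
    rw [show i + 1 + 2 * k = i + n * M by omega] at h5
    omega
  have hd0 : ∀ i, (2 : ℤ) ∣ d i - d 0 := by
    intro i
    induction i with
    | zero => simp
    | succ i ih =>
      have h := dvd_add (hd1' i) ih
      simpa using h
  have hfin := hd1 D hD0 (by omega)
  have hRs : R = (D + 2) + D := by omega
  nth_rewrite 1 [hRs] at hfin
  rw [Finset.sum_range_add] at hfin
  have h1 : ∑ i ∈ Finset.range (D + 2), ω ^ f i * (ω ^ f ((i + D) % R))⁻¹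
      = (D + 2) * (-1 : ℂ) ^ d 0 := by
    have : ∀ i ∈ Finset.range (D + 2), ω ^ f i * (ω ^ f ((i + D) % R))⁻¹ = (-1 : ℂ) ^ d 0 := by
      intro i hi
      have hi := Finset.mem_range.mp hi
      rw [Nat.mod_eq_of_lt (by omega), hterm _ _ _ (hd i)]
      exact hpar _ _ (hd0 i)
    rw [Finset.sum_congr rfl this]
    simp
  have h2 : ‖∑ i ∈ Finset.range D, ω ^ f (D + 2 + i) * (ω ^ f ((D + 2 + i + D) % R))⁻¹‖ ≤ D := by
    refine (norm_sum_le _ _).trans ?_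
    rw [Finset.sum_congr rfl fun i _ => s.norm_term _ _]
    simp
  have h3 := eq_neg_of_add_eq_zero_right hfin
  rw [h3, norm_neg, h1, norm_mul, norm_zpow, norm_neg, norm_one, one_zpow, mul_one] at h2
  have h4 : ‖((D : ℂ) + 2)‖ = D + 2 := by
    have : ((D : ℂ) + 2) = ((D + 2 : ℕ) : ℂ) := by push_cast; rfl
    rw [this, Complex.norm_natCast]; push_cast; rfl
  rw [h4] at h2
  linarith

theorem Setup.not_setup (s : Setup R C n K F ω) : False := by
  rcases Nat.eq_or_lt_of_le (Nat.succ_le_of_lt s.hK) with h1 | h1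
  · refine s.finish fun j i => ?_
    rw [← h1]; simp
  have hq : (K.minFac).Prime := Nat.minFac_prime (by omega)
  by_cases h2 : ∀ ℓ : ℕ, ℓ.Prime → ℓ ∣ K → ℓ = K.minFac
  · have hKe := Nat.eq_prime_pow_of_unique_prime_dvd s.hK.ne' (fun {d} hd hdK => h2 d hd hdK)
    obtain ⟨M, hM⟩ := Nat.minFac_dvd K
    generalize K.minFac = q at *
    generalize K.primeFactorsList.length = e at *
    obtain ⟨hM0, hD0, hD, hN, hζ⟩ := s.arith hq hM
    rcases Nat.lt_or_ge (n * M + q + n * M) R with h3 | h3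
    · exact s.finish ((s.step2 hq hM hKe).2 h3)
    · have hqR := s.dvdR hq hKe
      have hlt := s.lt
      have h2q := hq.two_le
      obtain ⟨w, hw⟩ := hqR
      set D := n * M
      have h5 : D < w := by
        have : q * D < q * w := by omega
        exact Nat.lt_of_mul_lt_mul_left this
      have h6 : q * (D + 1) ≤ q * w := Nat.mul_le_mul_left q h5
      rw [Nat.mul_add] at h6
      have hq2 : q = 2 := by
        by_contra hne
        have : 3 * D ≤ q * D := Nat.mul_le_mul_right D (by omega)
        omega
      subst hq2
      exact s.special hM hKe (by omega)
  · push Not at h2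
    obtain ⟨ℓ, hℓ, hℓK, hne⟩ := h2
    exact s.two_primes hℓ hq hne hℓK (Nat.minFac_dvd K)
end special

/-- one-variable quotient -/
theorem quot_poly (g : Polynomial ℤ) (D : ℤ) :
    ∃ H : Polynomial ℤ, ∀ i : ℤ, g.eval (i + D) - g.eval i = D * H.eval i := by
  have h := Polynomial.sub_dvd_eval_sub (Polynomial.X + Polynomial.C D) Polynomial.X
    (g.map (Polynomial.C : ℤ →+* Polynomial ℤ))
  rw [add_sub_cancel_left, Polynomial.eval_map, Polynomial.eval_map] at h
  obtain ⟨H, hH⟩ := h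
  refine ⟨H, fun i => ?_⟩
  have h1 := congrArg (Polynomial.eval i) hH
  have e : ∀ r : Polynomial ℤ, Polynomial.eval i (Polynomial.eval₂ Polynomial.C r g)
      = g.eval (r.eval i) := by
    intro r
    rw [← Polynomial.comp, Polynomial.eval_comp]
  rw [Polynomial.eval_sub, e, e, Polynomial.eval_mul] at h1
  simpa using h1

theorem slice (p : MvPolynomial (Fin 2) ℤ) (j : ℤ) :
    ∃ g : Polynomial ℤ, ∀ i : ℤ, MvPolynomial.eval ![i, j] p = g.eval i := by
  refine ⟨MvPolynomial.eval₂ Polynomial.C ![Polynomial.X, Polynomial.C j] p, fun i => ?_⟩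
  rw [← Polynomial.coe_evalRingHom, MvPolynomial.hom_eval₂]
  rw [MvPolynomial.eval, MvPolynomial.coe_eval₂Hom]
  congr 1
  · ext x; simp
  · ext k; fin_cases k <;> simp

theorem slice' (p : MvPolynomial (Fin 2) ℤ) (i : ℤ) :
    ∃ g : Polynomial ℤ, ∀ j : ℤ, MvPolynomial.eval ![i, j] p = g.eval j := by
  refine ⟨MvPolynomial.eval₂ Polynomial.C ![Polynomial.C i, Polynomial.X] p, fun j => ?_⟩
  rw [← Polynomial.coe_evalRingHom, MvPolynomial.hom_eval₂]
  rw [MvPolynomial.eval, MvPolynomial.coe_eval₂Hom]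
  congr 1
  · ext x; simp
  · ext k; fin_cases k <;> simp

theorem floor_shift {n : ℕ} (hn : 0 < n) {a b m h : ℤ} (e : b - a = n * m * h) :
    b / (n : ℤ) - a / (n : ℤ) = m * h := by
  have hn' : (n : ℤ) ≠ 0 := by exact_mod_cast hn.ne'
  rw [show b = a + n * (m * h) by linear_combination e, Int.add_mul_ediv_left _ _ hn']
  ring

/-- If the `R × C` array `S_{i,j} = ω^{⌊p(i,j)/n⌋}` (with `ω = e^{2πi/K}`,
`p ∈ ℤ[x,y]`, `n ∈ ℤ⁺`) has the Array Orthogonality Property for divisor `C`, then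
`C ≤ nK`, `R ≤ nK`, and hence `L = R·C ≤ n²K²`. -/
theorem aop_floored_bound (R C n K : ℕ) (hR : 0 < R) (hC : 0 < C) (hn : 0 < n)
    (hK : 0 < K) (p : MvPolynomial (Fin 2) ℤ)
    (ω : ℂ) (hω : ω = Complex.exp (2 * Real.pi * Complex.I / K))
    (S : ℕ → ℕ → ℂ)
    (hS : ∀ i j : ℕ,
      S i j = ω ^ (⌊(MvPolynomial.eval ![(i : ℤ), (j : ℤ)] p : ℚ) / n⌋))
    (hAOP : AOP R C S) :
    C ≤ n * K ∧ R ≤ n * K ∧ R * C ≤ n ^ 2 * K ^ 2 := by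
  have hne : NeZero R := ⟨hR.ne'⟩
  have hprim : IsPrimitiveRoot ω K := hω ▸ Complex.isPrimitiveRoot_exp K hK.ne'
  have hω0 : ω ≠ 0 := hprim.ne_zero hK.ne'
  have hnorm : ‖ω‖ = 1 := Complex.norm_eq_one_of_pow_eq_one hprim.pow_eq_one hK.ne'
  set F : ℕ → ℕ → ℤ := fun j i => (MvPolynomial.eval ![(i : ℤ), (j : ℤ)] p) / (n : ℤ) with hF
  have hSF : ∀ i j, S i j = ω ^ F j i := by
    intro i j
    rw [hS, hF]
    congr 1
    exact Rat.floor_intCast_div_natCast _ _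
  have hconj : ∀ a : ℤ, (starRingEnd ℂ) (ω ^ a) = (ω ^ a)⁻¹ := by
    intro a
    rw [Complex.inv_eq_conj]
    rw [norm_zpow, hnorm, one_zpow]
  have hx : ∀ (j k : ℕ) (τ : ZMod R), xcorr R (fun i => S i j) (fun i => S i k) τ.val
      = ∑ t : ZMod R, ω ^ F j t.val * (ω ^ F k (t + τ).val)⁻¹ := by
    intro j k τ
    have h1 := sum_zmod_range (R := R) (fun a b => ω ^ F j a * (ω ^ F k b)⁻¹) τ.val
    rw [ZMod.natCast_zmod_val] at h1
    rw [h1, xcorr]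
    refine Finset.sum_congr rfl fun i _ => ?_
    simp only [hSF, hconj]
  obtain ⟨hcross, hdiag⟩ := hAOP
  have hCle : C ≤ n * K := by
    by_contra hlt
    push Not at hlt
    have hNpos : 0 < n * K := Nat.mul_pos hn hK
    have h1 := hcross 0 0 (n * K) hC hlt hNpos.ne
    have h2 := hx 0 (n * K) 0
    rw [ZMod.val_zero, h1] at h2
    have h3 : ∀ t : ZMod R, ω ^ F 0 t.val * (ω ^ F (n * K) (t + 0).val)⁻¹ = 1 := by
      intro t
      rw [add_zero]
      obtain ⟨g, hg⟩ := slice' p (t.val : ℤ)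
      obtain ⟨H, hH⟩ := quot_poly g ((n * K : ℕ) : ℤ)
      have h4 : F (n * K) t.val - F 0 t.val = K * H.eval 0 := by
        simp only [hF, hg]
        apply floor_shift hn
        have := hH 0
        rw [zero_add] at this
        rw [Nat.cast_zero, this]
        push_cast
        ring
      have h5 : ω ^ F (n * K) t.val = ω ^ F 0 t.val := by
        have h6 := (hprim.zpow_eq_one_iff_dvd (F (n * K) t.val - F 0 t.val)).mpr ⟨_, h4⟩
        rw [zpow_sub₀ hω0, div_eq_one_iff_eq (zpow_ne_zero _ hω0)] at h6
        exact h6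
      rw [h5, mul_inv_cancel₀ (zpow_ne_zero _ hω0)]
    rw [Finset.sum_congr rfl fun t _ => h3 t] at h2
    simp only [Finset.sum_const, Finset.card_univ, ZMod.card, nsmul_eq_mul, mul_one] at h2
    have h7 : R = 0 := by exact_mod_cast h2.symm
    omega
  have hRle : R ≤ n * K := by
    by_contra hlt
    push Not at hlt
    have s : Setup R C n K (fun j : Fin C => F j) ω :=
      { hn := hn
        hK := hK
        hC := hC
        lt := hlt
        prim := hprim
        cross := by
          intro j k hjk τ
          rw [← hx]
          exact hcross _ _ _ j.2 k.2 (fun h => hjk (Fin.ext h))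
        diag := by
          intro τ hτ
          have h1 := hdiag τ.val (fun h => by
            have h2 := Nat.eq_zero_of_dvd_of_lt h τ.val_lt
            exact hτ ((ZMod.val_eq_zero τ).mp h2))
          rw [Finset.sum_range] at h1
          rw [← h1]
          exact Finset.sum_congr rfl fun j _ => (hx j j τ).symm
        quot := by
          intro m q j
          obtain ⟨g, hg⟩ := slice p ((j : ℕ) : ℤ)
          obtain ⟨H, hH⟩ := quot_poly g ((n * m : ℕ) : ℤ)
          refine ⟨fun i => H.eval (i : ℤ), fun i => ?_, fun i => ?_⟩
          · simp only [hF, hg]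
            apply floor_shift hn
            have := hH i
            push_cast at this ⊢
            exact this
          · have := Polynomial.sub_dvd_eval_sub (((i + q : ℕ)) : ℤ) (i : ℤ) H
            push_cast at this ⊢
            rwa [add_sub_cancel_left] at this }
    exact s.not_setup
  refine ⟨hCle, hRle, ?_⟩
  calc R * C ≤ (n * K) * (n * K) := Nat.mul_le_mul hRle hCle
    _ = n ^ 2 * K ^ 2 := by ring
end
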